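/- arXiv:1806.00279 — 2 statements merged into one kernel-verified Lean document; each statement's English description precedes it below -/
import Mathlib

section
/- Let q ≥ 3 and k ≥ 5. Every independent set Y of the q-Kneser graph qK_{2k:k} that is not contained in a dictator nor in the dual of a dictator satisfies |Y| < (1 + 3/q)·[k choose 1]_q·[2k−2 choose k−2]_q. -/
/-- The Gaussian binomial coefficient `[n choose k]_q`. -/
def gaussBinom (q n k : ℕ) : ℚ :=
  ∏ i ∈ Finset.range k, ((q : ℚ) ^ (n - i) - 1) / ((q : ℚ) ^ (i + 1) - 1)

/-!
Let `Y` be an intersecting family of `k`-spaces of a `2k`-space, and let `f P` be the deviation of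
the degree of the point `P` (the number of members of `Y` through `P`) from the mean degree. Since
`Y` is intersecting, `X R = ∑ P ≤ R, f P` is large for every member `R`, while `∑ R ∈ Y, X R` is the
variance `W = ∑ P, f P ^ 2`; by Cauchy–Schwarz it suffices to bound `∑ R ∈ Y, X R ^ 2` by a small
multiple of `W`. Expanding the square gives

* a diagonal term, at most `W` times the largest degree of a point;
* a sum over the lines `L ≤ R` of the products of `f` at two points of `L`. As a function on lines,
  this is the sum of a function induced by points, whose contribution is governed by the third
  moment of `f` over the hyperplanes and hence by the number of members inside a hyperplane, and of
  a function orthogonal to these, to which a second moment bound over all `k`-spaces applies.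

So a large family has a point on more than a tenth, or a hyperplane around more than a tenth, of its
members. Dually, consider only points `P`. If not all members contain `P`, at most
`[k]_q * [2k-2 choose k-2]_q` do, and a second moment bound on the lines through `P` shows that the
members through `P` and those avoiding `P` cannot both be numerous. Hence a large family has all its
members through one point or all inside one hyperplane.
-/

namespace WeakHiltonMilner

open Finset Module
open scoped Classical

section qNumber

/-- The `q`-analogue `[n]_q = 1 + q + ⋯ + q ^ (n - 1)` of `n`: the number of points of a projective
space of (linear) dimension `n` over a field with `q` elements. -/
def qNumber (q n : ℕ) : ℚ :=
  ∑ i ∈ range n, (q : ℚ) ^ i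

variable (q : ℕ)

@[simp] lemma qNumber_zero : qNumber q 0 = 0 := by simp [qNumber]

@[simp] lemma qNumber_one : qNumber q 1 = 1 := by simp [qNumber]

lemma qNumber_succ (n : ℕ) : qNumber q (n + 1) = qNumber q n + q ^ n :=
  sum_range_succ ..

lemma qNumber_add (m n : ℕ) : qNumber q (m + n) = qNumber q m + q ^ m * qNumber q n := by
  simp only [qNumber, sum_range_add, pow_add, mul_sum]

lemma qNumber_succ' (n : ℕ) : qNumber q (n + 1) = q * qNumber q n + 1 := by
  rw [add_comm n, qNumber_add, qNumber_one, pow_one, add_comm]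

lemma qNumber_two : qNumber q 2 = q + 1 := by simp [qNumber_succ', one_add_one_eq_two.symm]

lemma qNumber_nonneg (n : ℕ) : 0 ≤ qNumber q n :=
  sum_nonneg fun _ _ ↦ by positivity

lemma sub_one_mul_qNumber (n : ℕ) : ((q : ℚ) - 1) * qNumber q n = q ^ n - 1 :=
  mul_geom_sum ..

lemma qNumber_two_mul (k : ℕ) : qNumber q (2 * k) = qNumber q k * (1 + q ^ k) := by
  rw [two_mul, qNumber_add]
  ring

lemma qNumber_mono : Monotone (qNumber q) := fun m n hmn ↦
  sum_le_sum_of_subset_of_nonneg (range_mono hmn) fun _ _ _ ↦ by positivity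

lemma one_le_qNumber {n : ℕ} (hn : 0 < n) : 1 ≤ qNumber q n :=
  (qNumber_one q).symm.trans_le (qNumber_mono q hn)

lemma qNumber_pos {n : ℕ} (hn : 0 < n) : 0 < qNumber q n :=
  one_pos.trans_le (one_le_qNumber q hn)

lemma one_lt_qNumber {n : ℕ} (hq : 0 < q) (hn : 1 < n) : 1 < qNumber q n := by
  obtain ⟨m, rfl⟩ := Nat.exists_eq_add_of_le' hn
  have := qNumber_pos q m.succ_pos
  rw [qNumber_succ', lt_add_iff_pos_left]
  positivity

end qNumber

section gaussBinom

variable {q : ℕ}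

@[simp] lemma gaussBinom_zero_right (n : ℕ) : gaussBinom q n 0 = 1 := by simp [gaussBinom]

lemma pow_sub_one_div_pow_sub_one (hq : 2 ≤ q) (m n : ℕ) :
    ((q : ℚ) ^ n - 1) / ((q : ℚ) ^ m - 1) = qNumber q n / qNumber q m := by
  have hq : (q : ℚ) - 1 ≠ 0 := sub_ne_zero.2 (by exact_mod_cast (by omega : q ≠ 1))
  rw [← sub_one_mul_qNumber, ← sub_one_mul_qNumber, mul_div_mul_left _ _ hq]

lemma gaussBinom_eq_prod (hq : 2 ≤ q) (n m : ℕ) :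
    gaussBinom q n m = ∏ i ∈ range m, qNumber q (n - i) / qNumber q (i + 1) := by
  simp only [gaussBinom, pow_sub_one_div_pow_sub_one hq]

lemma gaussBinom_one_right (hq : 2 ≤ q) (n : ℕ) : gaussBinom q n 1 = qNumber q n := by
  simp [gaussBinom_eq_prod hq]

lemma gaussBinom_nonneg (hq : 2 ≤ q) (n m : ℕ) : 0 ≤ gaussBinom q n m := by
  rw [gaussBinom_eq_prod hq]
  exact prod_nonneg fun _ _ ↦ div_nonneg (qNumber_nonneg ..) (qNumber_nonneg ..)

lemma gaussBinom_succ_mul (hq : 2 ≤ q) (n m : ℕ) :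
    gaussBinom q n (m + 1) * qNumber q (m + 1) = gaussBinom q n m * qNumber q (n - m) := by
  rw [gaussBinom_eq_prod hq, gaussBinom_eq_prod hq, prod_range_succ, mul_assoc,
    div_mul_cancel₀ _ (qNumber_pos q m.succ_pos).ne']

lemma gaussBinom_succ_succ_mul (hq : 2 ≤ q) (n m : ℕ) :
    gaussBinom q (n + 1) (m + 1) * qNumber q (m + 1) = qNumber q (n + 1) * gaussBinom q n m := by
  have hm : ∏ i ∈ range m, qNumber q (i + 1) ≠ 0 :=
    prod_ne_zero_iff.2 fun i _ ↦ (qNumber_pos q i.succ_pos).ne'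
  have hm' := (qNumber_pos q m.succ_pos).ne'
  rw [gaussBinom_eq_prod hq, gaussBinom_eq_prod hq, prod_div_distrib, prod_div_distrib,
    prod_range_succ', prod_range_succ _ m]
  simp only [Nat.add_sub_add_right, Nat.sub_zero]
  field_simp

lemma gaussBinom_succ_succ (hq : 2 ≤ q) {n m : ℕ} (hmn : m ≤ n) :
    gaussBinom q (n + 1) (m + 1) = gaussBinom q n m + q ^ (m + 1) * gaussBinom q n (m + 1) := by
  apply mul_right_cancel₀ (qNumber_pos q m.succ_pos).ne'
  rw [gaussBinom_succ_succ_mul hq, add_mul, mul_assoc, gaussBinom_succ_mul hq,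
    show n + 1 = m + 1 + (n - m) by omega, qNumber_add]
  ring

lemma gaussBinom_self (hq : 2 ≤ q) (n : ℕ) : gaussBinom q n n = 1 := by
  induction n with
  | zero => simp
  | succ n ih =>
    have h := gaussBinom_succ_succ_mul hq n n
    rw [ih, mul_comm] at h
    exact mul_left_cancel₀ (qNumber_pos q n.succ_pos).ne' h

end gaussBinom

section subspaces

variable {F V : Type*} [Field F] [AddCommGroup V] [Module F V] [Finite V]

/-- The subspaces of dimension `k` lying between `D` and `E`, as a finite set. -/
noncomputable def subspaces (k : ℕ) (D E : Submodule F V) : Finset (Submodule F V) :=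
  (Set.toFinite {W : Submodule F V | finrank F W = k ∧ D ≤ W ∧ W ≤ E}).toFinset

/-- The points (one-dimensional subspaces) of the projective space of `E`. -/
noncomputable abbrev points (E : Submodule F V) : Finset (Submodule F V) := subspaces 1 ⊥ E

/-- The lines (two-dimensional subspaces) of the projective space of `E`. -/
noncomputable abbrev lines (E : Submodule F V) : Finset (Submodule F V) := subspaces 2 ⊥ E

variable {B C D E P U W : Submodule F V} {d e j k : ℕ}

@[simp] lemma mem_subspaces : W ∈ subspaces k D E ↔ finrank F W = k ∧ D ≤ W ∧ W ≤ E := by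
  simp [subspaces]

lemma filter_ge_subspaces : {W ∈ subspaces k D E | U ≤ W} = subspaces k (D ⊔ U) E := by
  ext W
  simp only [mem_filter, mem_subspaces, sup_le_iff]
  tauto

lemma filter_le_subspaces : {W ∈ subspaces k D E | W ≤ U} = subspaces k D (E ⊓ U) := by
  ext W
  simp only [mem_filter, mem_subspaces, le_inf_iff]
  tauto

lemma subspaces_eq_singleton_left (hD : finrank F D = d) (hDE : D ≤ E) :
    subspaces d D E = {D} := by
  ext W
  simp only [mem_subspaces, mem_singleton]
  refine ⟨fun ⟨hW, hDW, _⟩ ↦ (Submodule.eq_of_le_of_finrank_eq hDW (hD.trans hW.symm)).symm, ?_⟩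
  rintro rfl
  exact ⟨hD, le_rfl, hDE⟩

lemma subspaces_eq_singleton_right (hE : finrank F E = e) (hDE : D ≤ E) :
    subspaces e D E = {E} := by
  ext W
  simp only [mem_subspaces, mem_singleton]
  refine ⟨fun ⟨hW, _, hWE⟩ ↦ Submodule.eq_of_le_of_finrank_eq hWE (hW.trans hE.symm), ?_⟩
  rintro rfl
  exact ⟨hE, hDE, le_rfl⟩

lemma points_eq_singleton (hP : finrank F P = 1) : points P = {P} :=
  subspaces_eq_singleton_right hP bot_le

lemma sum_sum_subspaces {M : Type*} [AddCommMonoid M] (φ : Submodule F V → Submodule F V → M) :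
    ∑ W ∈ subspaces k D E, ∑ U ∈ subspaces j B W, φ U W =
      ∑ U ∈ subspaces j B E, ∑ W ∈ subspaces k (D ⊔ U) E, φ U W := by
  refine sum_comm' fun W U ↦ ?_
  simp only [mem_subspaces, sup_le_iff]
  exact ⟨fun ⟨⟨hW, hDW, hWE⟩, hU, hBU, hUW⟩ ↦ ⟨⟨hW, ⟨hDW, hUW⟩, hWE⟩, hU, hBU, hUW.trans hWE⟩,
    fun ⟨⟨hW, ⟨hDW, hUW⟩, hWE⟩, hU, hBU, _⟩ ↦ ⟨⟨hW, hDW, hWE⟩, hU, hBU, hUW⟩⟩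

lemma finrank_sup_eq_add_one (hBD : B ≤ D) (hBU : B ≤ U) (hU : finrank F U = finrank F B + 1)
    (hUD : ¬ U ≤ D) : finrank F (D ⊔ U : Submodule F V) = finrank F D + 1 := by
  have hlt : D ⊓ U < U := inf_le_right.lt_of_ne fun h ↦ hUD (inf_eq_right.1 h)
  have h₁ := Submodule.finrank_lt_finrank_of_lt hlt
  have h₂ := Submodule.finrank_mono (le_inf hBD hBU)
  have h₃ := Submodule.finrank_sup_add_finrank_inf_eq D U
  omega

lemma card_subspaces_sup (hDC : Disjoint D C) (k : ℕ) :
    #(subspaces (finrank F D + k) D (D ⊔ C)) = #(subspaces k ⊥ C) := by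
  have sup_inf {U : Submodule F V} (hU : U ≤ C) : (D ⊔ U) ⊓ C = U := by
    rw [sup_comm, sup_inf_assoc_of_le D hU, hDC.eq_bot, sup_bot_eq]
  have inf_sup {W : Submodule F V} (hDW : D ≤ W) (hWE : W ≤ D ⊔ C) : D ⊔ W ⊓ C = W := by
    rw [inf_comm, ← sup_inf_assoc_of_le C hDW, inf_eq_right.2 hWE]
  have finrank_sup {U : Submodule F V} (hU : U ≤ C) :
      finrank F (D ⊔ U : Submodule F V) = finrank F D + finrank F U := by
    have := Submodule.finrank_sup_add_finrank_inf_eq D U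
    rwa [(hDC.mono_right hU).eq_bot, finrank_bot] at this
  refine card_nbij' (· ⊓ C) (D ⊔ ·) ?_ ?_ ?_ ?_ <;> intro W hW <;>
    simp only [mem_coe, mem_subspaces] at hW ⊢
  · have := finrank_sup (inf_le_right : W ⊓ C ≤ C)
    rw [inf_sup hW.2.1 hW.2.2] at this
    exact ⟨by omega, bot_le, inf_le_right⟩
  · exact ⟨by rw [finrank_sup hW.2.2, hW.1], le_sup_left, sup_le_sup_left hW.2.2 D⟩
  · exact inf_sup hW.2.1 hW.2.2
  · exact sup_inf hW.2.2

variable [Finite F]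

local notation "q" => Nat.card F

lemma two_le_card : 2 ≤ q := Finite.one_lt_card

lemma card_points (hE : finrank F E = e) : (#(points E) : ℚ) = qNumber q e := by
  have equiv : Projectivization F E ≃ points E :=
    calc
      Projectivization F E ≃ {H : Submodule F E // finrank F H = 1} :=
        Projectivization.equivSubmodule F E
      _ ≃ {W : Set.Iic E // finrank F W.1 = 1} :=
        (Submodule.mapIic E).toEquiv.subtypeEquiv fun H ↦ by
          rw [← Submodule.finrank_map_subtype_eq E H]
          rfl
      _ ≃ {W : Submodule F V // W ∈ Set.Iic E ∧ finrank F W = 1} :=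
        Equiv.subtypeSubtypeEquivSubtypeInter (· ∈ Set.Iic E) (finrank F · = 1)
      _ ≃ points E := Equiv.subtypeEquivRight fun W ↦ by simp [and_comm]
  rw [← Fintype.card_coe, ← Nat.card_eq_fintype_card, ← Nat.card_congr equiv,
    Projectivization.card_of_finrank F E hE, qNumber]
  push_cast
  rfl

lemma card_covers (hDE : D ≤ E) (hD : finrank F D = d) (hE : finrank F E = e) :
    (#(subspaces (d + 1) D E) : ℚ) = qNumber q (e - d) := by
  obtain ⟨C, hDC⟩ := exists_isCompl D
  have hsup : D ⊔ C ⊓ E = E := by rw [← sup_inf_assoc_of_le C hDE, hDC.sup_eq_top, top_inf_eq]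
  have hdisj : Disjoint D (C ⊓ E) := hDC.disjoint.mono_right inf_le_left
  have hrank := Submodule.finrank_sup_add_finrank_inf_eq D (C ⊓ E)
  rw [hsup, hdisj.eq_bot, finrank_bot] at hrank
  have hcard := card_subspaces_sup hdisj 1
  rw [hsup, hD] at hcard
  rw [hcard, card_points (e := e - d) (by omega)]

theorem card_subspaces (hDE : D ≤ E) (hD : finrank F D = d) (hE : finrank F E = e) (hdk : d ≤ k) :
    (#(subspaces k D E) : ℚ) = gaussBinom q (e - d) (k - d) := by
  obtain ⟨m, rfl⟩ := Nat.exists_eq_add_of_le hdk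
  rw [Nat.add_sub_cancel_left]
  clear hdk
  induction m generalizing D d with
  | zero => simp [subspaces_eq_singleton_left hD hDE]
  | succ m ih =>
    have flags := sum_sum_subspaces (k := d + (m + 1)) (j := d + 1) (B := D) (D := D) (E := E)
      fun _ _ ↦ (1 : ℚ)
    simp only [sum_const, nsmul_eq_mul, mul_one] at flags
    have left : ∀ W ∈ subspaces (d + (m + 1)) D E,
        (#(subspaces (d + 1) D W) : ℚ) = qNumber q (m + 1) := fun W hW ↦ by
      obtain ⟨hW, hDW, -⟩ := mem_subspaces.1 hW
      rw [card_covers hDW hD hW, Nat.add_sub_cancel_left]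
    have right : ∀ U ∈ subspaces (d + 1) D E, (#(subspaces (d + (m + 1)) (D ⊔ U) E) : ℚ) =
        gaussBinom q (e - (d + 1)) m := fun U hU ↦ by
      obtain ⟨hU, hDU, hUE⟩ := mem_subspaces.1 hU
      rw [sup_eq_right.2 hDU, ← ih hUE hU, add_right_comm, add_assoc]
    rw [sum_congr rfl left, sum_congr rfl right, sum_const, sum_const, nsmul_eq_mul, nsmul_eq_mul,
      card_covers hDE hD hE] at flags
    apply mul_right_cancel₀ (qNumber_pos q m.succ_pos).ne'
    rw [flags, ← Nat.sub_sub]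
    cases e - d with
    | zero => simp [gaussBinom_succ_mul two_le_card]
    | succ N => rw [gaussBinom_succ_succ_mul two_le_card, Nat.add_sub_cancel]

end subspaces

lemma pow_mul_gaussBinom_le {q : ℕ} (hq : 2 ≤ q) {n m : ℕ} (hmn : m ≤ n + 1) :
    (q : ℚ) ^ m * gaussBinom q n m ≤ gaussBinom q (n + 1) m := by
  cases m with
  | zero => simp
  | succ m =>
    rw [gaussBinom_succ_succ hq (by omega)]
    exact le_add_of_nonneg_left (gaussBinom_nonneg hq ..)

section incidence

variable {F V : Type*} [Field F] [AddCommGroup V] [Module F V] [Finite V]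
variable {B D E L P : Submodule F V} {b d e k : ℕ} (f : Submodule F V → ℚ)

/-- The quadratic form `∑ f P * f Q` over the ordered pairs of distinct points of `E`. -/
noncomputable def pairForm (E : Submodule F V) : ℚ :=
  (∑ P ∈ points E, f P) ^ 2 - ∑ P ∈ points E, f P ^ 2

lemma pairForm_eq_sum_offDiag (E : Submodule F V) :
    pairForm f E = ∑ x ∈ (points E).offDiag, f x.1 * f x.2 := by
  rw [pairForm, sq, sum_mul_sum, ← sum_product', ← diag_union_offDiag,
    sum_union (disjoint_diag_offDiag _), sum_diag]
  simp [sq]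

variable [Finite F]

local notation "q" => Nat.card F

lemma sum_sum_covers (hBD : B ≤ D) (hDE : D ≤ E) (hB : finrank F B = b) (hD : finrank F D = d)
    (hE : finrank F E = e) (hdk : d < k) :
    ∑ R ∈ subspaces k D E, ∑ U ∈ subspaces (b + 1) B R, f U =
      gaussBinom q (e - d - 1) (k - d - 1) * ∑ U ∈ subspaces (b + 1) B E, f U +
      (gaussBinom q (e - d) (k - d) - gaussBinom q (e - d - 1) (k - d - 1)) *
        ∑ U ∈ subspaces (b + 1) B D, f U := by
  have hcard : ∀ U ∈ subspaces (b + 1) B E, (#(subspaces k (D ⊔ U) E) : ℚ) * f U =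
      gaussBinom q (e - d - 1) (k - d - 1) * f U + if U ≤ D then
        (gaussBinom q (e - d) (k - d) - gaussBinom q (e - d - 1) (k - d - 1)) * f U else 0 := by
    intro U hU
    obtain ⟨hU, hBU, hUE⟩ := mem_subspaces.1 hU
    split_ifs with hUD
    · rw [sup_eq_left.2 hUD, card_subspaces hDE hD hE hdk.le]
      ring
    · have hrank := finrank_sup_eq_add_one hBD hBU (hB ▸ hU) hUD
      rw [card_subspaces (sup_le hDE hUE) (hD ▸ hrank) hE hdk, add_zero, Nat.sub_sub, Nat.sub_sub]
  simp only [sum_sum_subspaces, sum_const, nsmul_eq_mul]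
  rw [sum_congr rfl hcard, sum_add_distrib, ← sum_filter, filter_le_subspaces, inf_eq_right.2 hDE,
    mul_sum, mul_sum]

lemma sum_sum_covers_of_sum_eq_zero (hBD : B ≤ D) (hDE : D ≤ E) (hB : finrank F B = b)
    (hD : finrank F D = d) (hE : finrank F E = e) (hdk : d ≤ k) (hke : k ≤ e)
    (hf : ∑ U ∈ subspaces (b + 1) B E, f U = 0) :
    ∑ R ∈ subspaces k D E, ∑ U ∈ subspaces (b + 1) B R, f U =
      q ^ (k - d) * gaussBinom q (e - d - 1) (k - d) * ∑ U ∈ subspaces (b + 1) B D, f U := by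
  obtain rfl | hdk := hdk.eq_or_lt
  · simp [subspaces_eq_singleton_left hD hDE]
  · rw [sum_sum_covers f hBD hDE hB hD hE hdk, hf]
    obtain ⟨m, hm⟩ := Nat.exists_eq_add_of_lt hdk
    obtain ⟨r, hr⟩ := Nat.exists_eq_add_of_le hke
    rw [show e - d = m + r + 1 by omega, show k - d = m + 1 by omega,
      gaussBinom_succ_succ two_le_card (by omega)]
    simp

lemma sum_sq_sum_covers (hB : finrank F B = b) (hE : finrank F E = e) (hbk : b < k)
    (hke : k ≤ e) (hf : ∑ U ∈ subspaces (b + 1) B E, f U = 0) :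
    ∑ R ∈ subspaces k B E, (∑ U ∈ subspaces (b + 1) B R, f U) ^ 2 =
      q ^ (k - b - 1) * gaussBinom q (e - b - 2) (k - b - 1) *
        ∑ U ∈ subspaces (b + 1) B E, f U ^ 2 := by
  have hU : ∀ U ∈ subspaces (b + 1) B E,
      ∑ R ∈ subspaces k (B ⊔ U) E, f U * ∑ W ∈ subspaces (b + 1) B R, f W =
        q ^ (k - b - 1) * gaussBinom q (e - b - 2) (k - b - 1) * f U ^ 2 := by
    intro U hU
    obtain ⟨hU, hBU, hUE⟩ := mem_subspaces.1 hU
    rw [sup_eq_right.2 hBU, ← mul_sum, sum_sum_covers_of_sum_eq_zero f hBU hUE hB hU hE hbk hke hf,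
      subspaces_eq_singleton_right hU hBU, sum_singleton]
    simp only [Nat.sub_sub]
    ring
  simp only [sq, sum_mul] at hU ⊢
  rw [sum_sum_subspaces, sum_congr rfl hU, mul_sum]

lemma sum_sq_sum_covers_le (hB : finrank F B = b) (hE : finrank F E = e) (hbk : b < k) (hke : k < e)
    (hf : ∑ U ∈ subspaces (b + 1) B E, f U = 0) :
    ∑ R ∈ subspaces k B E, (∑ U ∈ subspaces (b + 1) B R, f U) ^ 2 ≤
      gaussBinom q (e - b - 1) (k - b - 1) * ∑ U ∈ subspaces (b + 1) B E, f U ^ 2 := by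
  rw [sum_sq_sum_covers f hB hE hbk hke.le hf, show e - b - 1 = e - b - 2 + 1 by omega]
  gcongr
  exact pow_mul_gaussBinom_le two_le_card (by omega)

lemma sum_sum_points_of_pencil (hP : finrank F P = 1) (hPE : P ≤ E) (hE : finrank F E = e) :
    ∑ L ∈ subspaces 2 P E, ∑ Q ∈ points L, f Q =
      ∑ Q ∈ points E, f Q + (qNumber q (e - 1) - 1) * f P := by
  have := sum_sum_covers f bot_le hPE (finrank_bot F V) hP hE one_lt_two
  simpa [gaussBinom_one_right two_le_card, subspaces_eq_singleton_right hP bot_le] using this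

lemma sum_pairForm_lines (E : Submodule F V) :
    ∑ L ∈ lines E, pairForm f L = pairForm f E := by
  have expand (L : Submodule F V) :
      pairForm f L = ∑ P ∈ points L, f P * (∑ Q ∈ points L, f Q - f P) := by
    simp only [pairForm, mul_sub, sum_sub_distrib, ← sum_mul, sq]
  simp only [expand, sum_sum_subspaces]
  refine sum_congr rfl fun P hP ↦ ?_
  obtain ⟨hP, -, hPE⟩ := mem_subspaces.1 hP
  rw [bot_sup_eq, ← mul_sum, sum_sub_distrib, sum_sum_points_of_pencil f hP hPE rfl, sum_const,
    nsmul_eq_mul, card_covers hPE hP rfl]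
  ring

lemma pairForm_sq_le (hL : finrank F L = 2) :
    pairForm f L ^ 2 ≤ q * (q + 1) * pairForm (f ^ 2) L := by
  have hpoints : (#(points L) : ℚ) = q + 1 := by rw [card_points hL, qNumber_two]
  have hcard : (#(points L).offDiag : ℚ) = q * (q + 1) := by
    rw [offDiag_card, Nat.cast_sub (Nat.le_mul_self _), Nat.cast_mul, hpoints]
    ring
  rw [pairForm_eq_sum_offDiag, pairForm_eq_sum_offDiag, ← hcard]
  simpa only [mul_pow, Pi.pow_apply] using
    sq_sum_le_card_mul_sum_sq (s := (points L).offDiag) (f := fun x ↦ f x.1 * f x.2)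

lemma sum_pairForm_sq_le (E : Submodule F V) :
    ∑ L ∈ lines E, pairForm f L ^ 2 ≤ q * (q + 1) * (∑ P ∈ points E, f P ^ 2) ^ 2 := by
  calc
    ∑ L ∈ lines E, pairForm f L ^ 2 ≤ ∑ L ∈ lines E, q * (q + 1) * pairForm (f ^ 2) L :=
      sum_le_sum fun L hL ↦ pairForm_sq_le f (mem_subspaces.1 hL).1
    _ = q * (q + 1) * pairForm (f ^ 2) E := by rw [← mul_sum, sum_pairForm_lines]
    _ ≤ q * (q + 1) * (∑ P ∈ points E, f P ^ 2) ^ 2 := by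
      gcongr
      exact sub_le_self _ (sum_nonneg fun _ _ ↦ sq_nonneg _)

end incidence

lemma gaussBinom_le_succ_succ {q : ℕ} (hq : 2 ≤ q) {n m : ℕ} (hmn : m ≤ n) :
    gaussBinom q n m ≤ gaussBinom q (n + 1) (m + 1) := by
  rw [gaussBinom_succ_succ hq hmn]
  have := gaussBinom_nonneg hq n (m + 1)
  exact le_add_of_nonneg_right (by positivity)

section pencils

variable {F V : Type*} [Field F] [AddCommGroup V] [Module F V] [Finite V]
variable {L M P : Submodule F V} {k : ℕ} (g : Submodule F V → ℚ)

local notation "q" => Nat.card F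
local notation "n" => finrank F V

/-- The sum of a function on lines over the pencil of all lines through the point `P`. -/
noncomputable def pencilSum (P : Submodule F V) : ℚ :=
  ∑ L ∈ subspaces 2 P ⊤, g L

lemma sum_mul_pencilSum (f : Submodule F V → ℚ) :
    ∑ P ∈ points ⊤, f P * pencilSum g P = ∑ L ∈ lines ⊤, (∑ P ∈ points L, f P) * g L := by
  simp only [pencilSum, mul_sum, sum_mul, sum_sum_subspaces (k := 2), bot_sup_eq]

/-- The function `u` on points for which `L ↦ ∑ P ∈ points L, u P` is the orthogonal projection of
`g` to the space of all functions on lines of this shape. The formula is the solution of the system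
`pencilSum (linePart g) P = 0`. -/
noncomputable def pointPart (P : Submodule F V) : ℚ :=
  (pencilSum g P - (∑ L ∈ lines ⊤, g L) / qNumber q (n - 1)) / (qNumber q (n - 1) - 1)

/-- The component of `g` orthogonal to the functions on lines that are induced by functions on
points; see `pointPart`. -/
noncomputable def linePart (L : Submodule F V) : ℚ :=
  g L - ∑ P ∈ points L, pointPart g P

lemma sum_mul_pointPart (g : Submodule F V → ℚ) {f : Submodule F V → ℚ}
    (hf : ∑ P ∈ points ⊤, f P = 0) :
    ∑ P ∈ points ⊤, f P * pointPart g P =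
      (∑ L ∈ lines ⊤, g L * ∑ P ∈ points L, f P) / (qNumber q (n - 1) - 1) := by
  simp only [pointPart, mul_div_assoc', mul_sub, ← sum_div, sum_sub_distrib, ← sum_mul, hf,
    sum_mul_pencilSum, zero_mul, zero_div, sub_zero, mul_comm]

variable [Finite F]

lemma sum_pencilSum : ∑ P ∈ points ⊤, pencilSum g P = (q + 1) * ∑ L ∈ lines ⊤, g L := by
  have h := sum_mul_pencilSum g 1
  simp only [Pi.one_apply, one_mul, sum_const, nsmul_one] at h
  rw [h, mul_sum]
  refine sum_congr rfl fun L hL ↦ ?_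
  rw [card_points (mem_subspaces.1 hL).1, qNumber_two]

lemma sum_pointPart (hn : 3 ≤ n) :
    ∑ P ∈ points ⊤, pointPart g P = (∑ L ∈ lines ⊤, g L) / qNumber q (n - 1) := by
  have hr := (sub_pos.2 (one_lt_qNumber q Nat.card_pos (show 1 < n - 1 by omega))).ne'
  have hr' := (qNumber_pos q (show 0 < n - 1 by omega)).ne'
  have hsucc := qNumber_succ' q (n - 1)
  rw [Nat.sub_add_cancel (by omega)] at hsucc
  simp only [pointPart]
  rw [← sum_div, sum_sub_distrib, sum_pencilSum, sum_const, nsmul_eq_mul,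
    card_points (finrank_top F V), hsucc]
  field_simp
  ring

lemma pencilSum_linePart (hn : 3 ≤ n) (hP : finrank F P = 1) : pencilSum (linePart g) P = 0 := by
  have hr := (sub_pos.2 (one_lt_qNumber q Nat.card_pos (show 1 < n - 1 by omega))).ne'
  simp only [pencilSum, linePart, sum_sub_distrib]
  rw [sum_sum_points_of_pencil _ hP le_top (finrank_top F V), sum_pointPart g hn, pointPart,
    mul_div_cancel₀ _ hr, pencilSum]
  ring

lemma sum_linePart_sq_le (hn : 3 ≤ n) :
    ∑ L ∈ lines ⊤, linePart g L ^ 2 ≤ ∑ L ∈ lines ⊤, g L ^ 2 := by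
  have orthogonal : ∑ L ∈ lines ⊤, (∑ P ∈ points L, pointPart g P) * linePart g L = 0 := by
    rw [← sum_mul_pencilSum]
    refine sum_eq_zero fun P hP ↦ ?_
    rw [pencilSum_linePart g hn (mem_subspaces.1 hP).1, mul_zero]
  have pythagoras : ∑ L ∈ lines ⊤, g L ^ 2 =
      ∑ L ∈ lines ⊤, linePart g L ^ 2 + ∑ L ∈ lines ⊤, (∑ P ∈ points L, pointPart g P) ^ 2 +
        2 * ∑ L ∈ lines ⊤, (∑ P ∈ points L, pointPart g P) * linePart g L := by
    rw [mul_sum, ← sum_add_distrib, ← sum_add_distrib]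
    refine sum_congr rfl fun L _ ↦ ?_
    rw [linePart]
    ring
  rw [pythagoras, orthogonal, mul_zero, add_zero]
  exact le_add_of_nonneg_right (sum_nonneg fun _ _ ↦ sq_nonneg _)

lemma card_subspaces_sup_lines (hL : finrank F L = 2) (hM : finrank F M = 2) (hk : 4 ≤ k) :
    (#(subspaces k (L ⊔ M) ⊤) : ℚ) = gaussBinom q (n - 4) (k - 4) +
      (gaussBinom q (n - 3) (k - 3) - gaussBinom q (n - 4) (k - 4)) * #(points (L ⊓ M)) +
      if M = L then gaussBinom q (n - 2) (k - 2) - (q + 1) * gaussBinom q (n - 3) (k - 3) +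
        q * gaussBinom q (n - 4) (k - 4) else 0 := by
  have hrank := Submodule.finrank_sup_add_finrank_inf_eq L M
  rw [hL, hM] at hrank
  split_ifs with hML
  · subst hML
    rw [sup_idem, inf_idem, card_subspaces le_top hL (finrank_top F V) (by omega), card_points hL,
      qNumber_two]
    ring
  · have hlt : L ⊓ M < M := inf_le_right.lt_of_ne fun h ↦
      hML (Submodule.eq_of_le_of_finrank_eq (inf_eq_right.1 h) (hM.trans hL.symm))
    have hinf := Submodule.finrank_lt_finrank_of_lt hlt
    rw [hM] at hinf
    obtain h | h : finrank F ↥(L ⊓ M) = 0 ∨ finrank F ↥(L ⊓ M) = 1 := by omega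
    · rw [card_subspaces le_top (d := 4) (by omega) (finrank_top F V) hk, card_points h]
      simp
    · rw [card_subspaces le_top (d := 3) (by omega) (finrank_top F V) (by omega), card_points h]
      simp

variable {g}

lemma sum_eq_zero_of_pencilSum_eq_zero (hg : ∀ P ∈ points ⊤, pencilSum g P = 0) :
    ∑ L ∈ lines ⊤, g L = 0 := by
  have hsum := sum_pencilSum g
  rw [sum_eq_zero hg, eq_comm, mul_eq_zero] at hsum
  exact hsum.resolve_left (by positivity)

lemma sum_sum_lines_of_pencilSum_eq_zero (hg : ∀ P ∈ points ⊤, pencilSum g P = 0)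
    (hL : finrank F L = 2) (hk : 4 ≤ k) :
    ∑ R ∈ subspaces k L ⊤, ∑ M ∈ lines R, g M =
      (gaussBinom q (n - 2) (k - 2) - (q + 1) * gaussBinom q (n - 3) (k - 3) +
        q * gaussBinom q (n - 4) (k - 4)) * g L := by
  have meeting : ∑ M ∈ lines ⊤, (#(points (L ⊓ M)) : ℚ) * g M = 0 := by
    have h := sum_mul_pencilSum g fun P ↦ if P ≤ L then 1 else 0
    simp only [← sum_filter, filter_le_subspaces, sum_const, nsmul_one, inf_comm _ L] at h
    rw [← h]
    exact sum_eq_zero fun P hP ↦ by rw [hg P hP, mul_zero]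
  have hmem : L ∈ lines ⊤ := mem_subspaces.2 ⟨hL, bot_le, le_top⟩
  simp only [sum_sum_subspaces, sum_const, nsmul_eq_mul]
  rw [sum_congr rfl fun M hM ↦ by
    rw [card_subspaces_sup_lines hL (mem_subspaces.1 hM).1 hk, add_mul, add_mul, mul_assoc]]
  rw [sum_add_distrib, sum_add_distrib, ← mul_sum, ← mul_sum, meeting,
    sum_eq_zero_of_pencilSum_eq_zero hg]
  simp [ite_mul, hmem]

lemma sum_sq_sum_lines_le (hg : ∀ P ∈ points ⊤, pencilSum g P = 0) (hk : 4 ≤ k) (hkn : k ≤ n) :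
    ∑ R ∈ subspaces k ⊥ ⊤, (∑ L ∈ lines R, g L) ^ 2 ≤
      gaussBinom q (n - 2) (k - 2) * ∑ L ∈ lines ⊤, g L ^ 2 := by
  have hc₄ := gaussBinom_nonneg (two_le_card (F := F)) (n - 4) (k - 4)
  have hc₃ := gaussBinom_le_succ_succ (two_le_card (F := F)) (show k - 4 ≤ n - 4 by omega)
  rw [show n - 4 + 1 = n - 3 by omega, show k - 4 + 1 = k - 3 by omega] at hc₃
  calc
    ∑ R ∈ subspaces k ⊥ ⊤, (∑ L ∈ lines R, g L) ^ 2 =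
        ∑ L ∈ lines ⊤, g L * ∑ R ∈ subspaces k L ⊤, ∑ M ∈ lines R, g M := by
      simp only [sq, sum_sum_subspaces (k := k) (j := 2) (D := ⊥), bot_sup_eq, mul_comm,
        mul_sum]
    _ = ∑ L ∈ lines ⊤, (gaussBinom q (n - 2) (k - 2) - (q + 1) * gaussBinom q (n - 3) (k - 3) +
          q * gaussBinom q (n - 4) (k - 4)) * g L ^ 2 := by
      refine sum_congr rfl fun L hL ↦ ?_
      rw [sum_sum_lines_of_pencilSum_eq_zero hg (mem_subspaces.1 hL).1 hk]
      ring
    _ ≤ ∑ L ∈ lines ⊤, gaussBinom q (n - 2) (k - 2) * g L ^ 2 := by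
      gcongr
      have : (q : ℚ) * gaussBinom q (n - 4) (k - 4) ≤ (q + 1) * gaussBinom q (n - 3) (k - 3) := by
        gcongr
        linarith
      linarith
    _ = gaussBinom q (n - 2) (k - 2) * ∑ L ∈ lines ⊤, g L ^ 2 := by rw [mul_sum]

end pencils

section hyperplanes

variable {F V : Type*} [Field F] [Finite F] [AddCommGroup V] [Module F V] [Finite V]
variable {D : Submodule F V} {d : ℕ} {f : Submodule F V → ℚ} {a b : ℚ}

local notation "q" => Nat.card F
local notation "n" => finrank F V

lemma sum_hyperplanes (hf : ∑ P ∈ points ⊤, f P = 0) (hD : finrank F D = d) (hdn : d + 1 ≤ n) :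
    ∑ H ∈ subspaces (n - 1) D ⊤, ∑ P ∈ points H, f P =
      q ^ (n - 1 - d) * ∑ P ∈ points D, f P := by
  rw [sum_sum_covers_of_sum_eq_zero f bot_le le_top (finrank_bot F V) hD (finrank_top F V)
    (by omega) (Nat.sub_le ..) hf, Nat.sub_right_comm, gaussBinom_self two_le_card, mul_one]

lemma sum_sq_hyperplanes (hf : ∑ P ∈ points ⊤, f P = 0) (hn : 2 ≤ n) :
    ∑ H ∈ subspaces (n - 1) ⊥ ⊤, (∑ P ∈ points H, f P) ^ 2 =
      q ^ (n - 2) * ∑ P ∈ points ⊤, f P ^ 2 := by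
  have h := sum_sq_sum_covers f (finrank_bot F V) (finrank_top F V) (k := n - 1) (by omega)
    (Nat.sub_le ..) hf
  rwa [Nat.sub_zero, Nat.sub_zero, Nat.sub_sub, gaussBinom_self two_le_card, mul_one] at h

lemma sum_cube_hyperplanes (hf : ∑ P ∈ points ⊤, f P = 0) (hn : 3 ≤ n) :
    ∑ H ∈ subspaces (n - 1) ⊥ ⊤, (∑ P ∈ points H, f P) ^ 3 =
      q ^ (n - 2) * ∑ P ∈ points ⊤, f P ^ 3 +
        q ^ (n - 3) * ∑ L ∈ lines ⊤, pairForm f L * ∑ P ∈ points L, f P := by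
  have cube (H : Submodule F V) : (∑ P ∈ points H, f P) ^ 3 =
      ∑ P ∈ points H, f P ^ 2 * ∑ Q ∈ points H, f Q +
        ∑ L ∈ lines H, pairForm f L * ∑ Q ∈ points H, f Q := by
    rw [← sum_mul, ← sum_mul, sum_pairForm_lines, pairForm]
    ring
  simp only [cube, sum_add_distrib]
  rw [sum_sum_subspaces, sum_sum_subspaces]
  simp only [bot_sup_eq, ← mul_sum]
  rw [mul_sum, mul_sum]
  congr 1 <;> refine sum_congr rfl fun U hU ↦ ?_
  · obtain ⟨hU, -⟩ := mem_subspaces.1 hU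
    rw [sum_hyperplanes hf hU (by omega), points_eq_singleton hU, sum_singleton,
      Nat.sub_sub]
    ring
  · obtain ⟨hU, -⟩ := mem_subspaces.1 hU
    rw [sum_hyperplanes hf hU (by omega), Nat.sub_sub]
    ring

-- Comparing the third moment over the hyperplanes with `a` times the second moment isolates the sum
-- over the lines; the cubes at the points are at least `-b` times the squares.
lemma sum_pairForm_mul_sum_le (hf : ∑ P ∈ points ⊤, f P = 0) (hn : 3 ≤ n)
    (ha : ∀ H ∈ subspaces (n - 1) ⊥ ⊤, ∑ P ∈ points H, f P ≤ a) (hb : ∀ P ∈ points ⊤, -b ≤ f P) :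
    ∑ L ∈ lines ⊤, pairForm f L * ∑ P ∈ points L, f P ≤
      q * (a + b) * ∑ P ∈ points ⊤, f P ^ 2 := by
  have hq : (0 : ℚ) < q := by exact_mod_cast Nat.card_pos
  have cubes_le : ∑ H ∈ subspaces (n - 1) ⊥ ⊤, (∑ P ∈ points H, f P) ^ 3 ≤
      a * (q ^ (n - 2) * ∑ P ∈ points ⊤, f P ^ 2) := by
    rw [← sum_sq_hyperplanes hf (by omega), mul_sum]
    refine sum_le_sum fun H hH ↦ ?_
    rw [pow_succ']
    exact mul_le_mul_of_nonneg_right (ha H hH) (sq_nonneg _)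
  have le_cubes : -b * ∑ P ∈ points ⊤, f P ^ 2 ≤ ∑ P ∈ points ⊤, f P ^ 3 := by
    rw [mul_sum]
    refine sum_le_sum fun P hP ↦ ?_
    rw [pow_succ' _ 2]
    exact mul_le_mul_of_nonneg_right (hb P hP) (sq_nonneg _)
  rw [sum_cube_hyperplanes hf hn, show n - 2 = n - 3 + 1 by omega, pow_succ] at cubes_le
  refine le_of_mul_le_mul_left ?_ (pow_pos hq (n - 3))
  have := mul_le_mul_of_nonneg_left le_cubes (by positivity : (0 : ℚ) ≤ q ^ (n - 3) * q)
  linarith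

end hyperplanes

section families

variable {F V : Type*} [Field F] [AddCommGroup V] [Module F V] [Finite V]
variable (Y : Finset (Submodule F V)) {B E H R S : Submodule F V} {j k : ℕ}

/-- The number of members of the family `Y` that contain `U`. -/
noncomputable def degree (U : Submodule F V) : ℚ := #{R ∈ Y | U ≤ R}

/-- The number of members of the family `Y` that are contained in `H`. -/
noncomputable def codegree (H : Submodule F V) : ℚ := #{R ∈ Y | R ≤ H}

local notation "q" => Nat.card F
local notation "n" => finrank F V

lemma sum_mul_card_filter_le {ι : Type*} (s : Finset ι) (φ : ι → Submodule F V)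
    (f : Submodule F V → ℚ) :
    ∑ U ∈ subspaces j B E, f U * #{i ∈ s | U ≤ φ i} =
      ∑ i ∈ s, ∑ U ∈ subspaces j B (E ⊓ φ i), f U := by
  have expand (U : Submodule F V) :
      f U * #{i ∈ s | U ≤ φ i} = ∑ i ∈ s, if U ≤ φ i then f U else 0 := by
    rw [← sum_filter, sum_const, nsmul_eq_mul, mul_comm]
  simp only [expand]
  rw [sum_comm]
  simp only [← sum_filter, filter_le_subspaces]

lemma sum_mul_degree (f : Submodule F V → ℚ) :
    ∑ U ∈ subspaces j B E, f U * degree Y U = ∑ R ∈ Y, ∑ U ∈ subspaces j B (E ⊓ R), f U :=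
  sum_mul_card_filter_le Y id f

lemma sum_degree :
    ∑ U ∈ subspaces j B E, degree Y U = ∑ R ∈ Y, (#(subspaces j B (E ⊓ R)) : ℚ) := by
  simpa using sum_mul_degree Y (j := j) (B := B) (E := E) 1

variable {Y}

lemma finrank_hyperplane_inf (hH : finrank F H = n - 1) (hR : finrank F R = k) (hRH : ¬ R ≤ H) :
    finrank F ↥(H ⊓ R) = k - 1 := by
  have h₁ := Submodule.finrank_sup_add_finrank_inf_eq H R
  have h₂ := Submodule.finrank_lt_finrank_of_lt (left_lt_sup.2 hRH)
  have h₃ := (H ⊔ R).finrank_le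
  omega

lemma points_nonempty (hE : E ≠ ⊥) : (points E).Nonempty := by
  obtain ⟨v, hv, hv0⟩ := E.ne_bot_iff.1 hE
  exact ⟨F ∙ v, mem_subspaces.2 ⟨finrank_span_singleton hv0, bot_le, by simpa⟩⟩

lemma card_le_sum_degree (hR : ∀ S ∈ Y, R ⊓ S ≠ ⊥) : (#Y : ℚ) ≤ ∑ P ∈ points R, degree Y P := by
  rw [sum_degree, card_eq_sum_ones, Nat.cast_sum]
  exact sum_le_sum fun S hS ↦ Nat.cast_le.2 (points_nonempty (hR S hS)).card_pos

variable [Finite F]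

lemma sum_degree_points_top (hY : ∀ R ∈ Y, finrank F R = k) :
    ∑ P ∈ points ⊤, degree Y P = qNumber q k * #Y := by
  rw [sum_degree, sum_congr rfl fun R hR ↦ by rw [top_inf_eq, card_points (hY R hR)], sum_const,
    nsmul_eq_mul, mul_comm]

lemma sum_degree_points_hyperplane (hY : ∀ R ∈ Y, finrank F R = k) (hk : 1 ≤ k)
    (hH : finrank F H = n - 1) :
    ∑ P ∈ points H, degree Y P = qNumber q (k - 1) * #Y + q ^ (k - 1) * codegree Y H := by
  have hcard : ∀ R ∈ Y, (#(points (H ⊓ R)) : ℚ) =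
      qNumber q (k - 1) + if R ≤ H then (q : ℚ) ^ (k - 1) else 0 := by
    intro R hR
    split_ifs with hRH
    · rw [inf_eq_right.2 hRH, card_points (hY R hR), ← qNumber_succ, Nat.sub_add_cancel hk]
    · rw [card_points (finrank_hyperplane_inf hH (hY R hR) hRH), add_zero]
  rw [sum_degree, sum_congr rfl hcard, sum_add_distrib, ← sum_filter]
  simp only [sum_const, nsmul_eq_mul, codegree]
  ring

end families

section variance

variable {F V : Type*} [Field F] [AddCommGroup V] [Module F V] [Finite V]
variable {Y : Finset (Submodule F V)} {H : Submodule F V} {k : ℕ} {p h T : ℚ}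

local notation "q" => Nat.card F
local notation "n" => finrank F V

variable (Y) in
/-- The mean of the degrees of the points. -/
noncomputable def meanDegree : ℚ := (∑ P ∈ points ⊤, degree Y P) / qNumber q n

variable (Y) in
/-- The excess of the degree of the point `P` over the mean degree. -/
noncomputable def deviation (P : Submodule F V) : ℚ := degree Y P - meanDegree Y

variable (Y) in
/-- The (unnormalised) variance of the degrees of the points. -/
noncomputable def degreeVariance : ℚ := ∑ P ∈ points ⊤, deviation Y P ^ 2

lemma meanDegree_nonneg : 0 ≤ meanDegree Y :=
  div_nonneg (sum_nonneg fun _ _ ↦ Nat.cast_nonneg _) (qNumber_nonneg ..)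

lemma degreeVariance_nonneg : 0 ≤ degreeVariance Y := sum_nonneg fun _ _ ↦ sq_nonneg _

variable [Finite F]

lemma meanDegree_eq (hY : ∀ R ∈ Y, finrank F R = k) :
    meanDegree Y = qNumber q k / qNumber q n * #Y := by
  rw [meanDegree, sum_degree_points_top hY, mul_div_right_comm]

lemma sum_deviation_points (E : Submodule F V) :
    ∑ P ∈ points E, deviation Y P =
      ∑ P ∈ points E, degree Y P - qNumber q (finrank F E) * meanDegree Y := by
  simp only [deviation, sum_sub_distrib, sum_const, nsmul_eq_mul, card_points rfl]

lemma sum_deviation (hn : 0 < n) : ∑ P ∈ points ⊤, deviation Y P = 0 := by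
  rw [sum_deviation_points, finrank_top, meanDegree, mul_div_cancel₀ _ (qNumber_pos q hn).ne',
    sub_self]

lemma sum_deviation_mul_degree (hn : 0 < n) :
    ∑ P ∈ points ⊤, deviation Y P * degree Y P = degreeVariance Y := by
  have expand (P : Submodule F V) :
      deviation Y P * degree Y P = deviation Y P ^ 2 + meanDegree Y * deviation Y P := by
    rw [deviation]
    ring
  simp only [expand, sum_add_distrib, ← mul_sum, sum_deviation hn, mul_zero, add_zero,
    degreeVariance]

lemma sum_sum_deviation (hn : 0 < n) :
    ∑ R ∈ Y, ∑ P ∈ points R, deviation Y P = degreeVariance Y := by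
  rw [← sum_deviation_mul_degree hn, sum_mul_degree]
  simp only [top_inf_eq]

lemma le_degreeVariance (hn : 0 < n) (hY : ∀ R ∈ Y, finrank F R = k)
    (hint : ∀ R ∈ Y, ∀ S ∈ Y, R ⊓ S ≠ ⊥) :
    (1 - qNumber q k ^ 2 / qNumber q n) * #Y ^ 2 ≤ degreeVariance Y := by
  calc
    (1 - qNumber q k ^ 2 / qNumber q n) * #Y ^ 2
        = ∑ _R ∈ Y, (#Y - qNumber q k * meanDegree Y) := by
      rw [meanDegree_eq hY, sum_const, nsmul_eq_mul]
      ring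
    _ ≤ ∑ R ∈ Y, ∑ P ∈ points R, deviation Y P := by
      refine sum_le_sum fun R hR ↦ ?_
      rw [sum_deviation_points, hY R hR]
      exact sub_le_sub_right (card_le_sum_degree (hint R hR)) _
    _ = degreeVariance Y := sum_sum_deviation hn

lemma sum_deviation_hyperplane_le (hY : ∀ R ∈ Y, finrank F R = k) (hk : 1 ≤ k) (hkn : k ≤ n)
    (hH : finrank F H = n - 1) :
    ∑ P ∈ points H, deviation Y P ≤ q ^ (k - 1) * codegree Y H := by
  have ratio : qNumber q (k - 1) * qNumber q n ≤ qNumber q k * qNumber q (n - 1) := by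
    obtain ⟨i, rfl⟩ := Nat.exists_eq_add_of_le' hk
    obtain ⟨m, hm⟩ := Nat.exists_eq_add_of_le' (hk.trans hkn)
    have := qNumber_mono q (show i ≤ m by omega)
    rw [hm, Nat.add_sub_cancel, Nat.add_sub_cancel, qNumber_succ', qNumber_succ']
    linarith
  have hn := qNumber_pos q (show 0 < n by omega)
  have : qNumber q (k - 1) * #Y ≤ qNumber q (n - 1) * meanDegree Y := by
    rw [meanDegree_eq hY, ← mul_assoc]
    gcongr
    rwa [← mul_div_assoc, le_div_iff₀ hn, mul_comm (qNumber q (n - 1))]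
  rw [sum_deviation_points, sum_degree_points_hyperplane hY hk hH, hH]
  linarith

lemma sum_sum_lines_eq (g : Submodule F V → ℚ) (hY : ∀ R ∈ Y, finrank F R = k) :
    ∑ R ∈ Y, ∑ L ∈ lines R, g L = ∑ R ∈ Y, ∑ L ∈ lines R, linePart g L +
      qNumber q (k - 1) * ∑ P ∈ points ⊤, pointPart g P * degree Y P := by
  have points_of_lines : ∀ R ∈ Y, ∑ L ∈ lines R, ∑ P ∈ points L, pointPart g P =
      qNumber q (k - 1) * ∑ P ∈ points R, pointPart g P := by
    intro R hR
    rw [sum_sum_subspaces, mul_sum]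
    refine sum_congr rfl fun P hP ↦ ?_
    obtain ⟨hP, -, hPR⟩ := mem_subspaces.1 hP
    rw [bot_sup_eq, sum_const, nsmul_eq_mul, card_covers hPR hP (hY R hR)]
  simp only [linePart, sum_sub_distrib]
  rw [sum_congr rfl points_of_lines, ← mul_sum, sum_mul_degree]
  simp only [top_inf_eq, sub_add_cancel]

lemma sq_sum_sum_linePart_le (g : Submodule F V → ℚ) (hY : ∀ R ∈ Y, finrank F R = k) (hk : 4 ≤ k)
    (hkn : k ≤ n) :
    (∑ R ∈ Y, ∑ L ∈ lines R, linePart g L) ^ 2 ≤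
      #Y * (gaussBinom q (n - 2) (k - 2) * ∑ L ∈ lines ⊤, g L ^ 2) := by
  have hsub : Y ⊆ subspaces k ⊥ ⊤ := fun R hR ↦ mem_subspaces.2 ⟨hY R hR, bot_le, le_top⟩
  calc
    (∑ R ∈ Y, ∑ L ∈ lines R, linePart g L) ^ 2
        ≤ #Y * ∑ R ∈ Y, (∑ L ∈ lines R, linePart g L) ^ 2 := sq_sum_le_card_mul_sum_sq
    _ ≤ #Y * ∑ R ∈ subspaces k ⊥ ⊤, (∑ L ∈ lines R, linePart g L) ^ 2 := by
      gcongr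
    _ ≤ #Y * (gaussBinom q (n - 2) (k - 2) * ∑ L ∈ lines ⊤, linePart g L ^ 2) := by
      gcongr
      refine sum_sq_sum_lines_le (fun P hP ↦ ?_) hk hkn
      exact pencilSum_linePart g (by omega) (mem_subspaces.1 hP).1
    _ ≤ #Y * (gaussBinom q (n - 2) (k - 2) * ∑ L ∈ lines ⊤, g L ^ 2) := by
      have := gaussBinom_nonneg (two_le_card (F := F)) (n - 2) (k - 2)
      gcongr _ * (_ * ?_)
      exact sum_linePart_sq_le g (by omega)

lemma sum_deviation_mul_pointPart_le (hY : ∀ R ∈ Y, finrank F R = k) (hk : 1 ≤ k) (hkn : k ≤ n)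
    (hn : 3 ≤ n) (hh : ∀ H : Submodule F V, finrank F H = n - 1 → codegree Y H ≤ h) :
    ∑ P ∈ points ⊤, deviation Y P * pointPart (pairForm (deviation Y)) P ≤
      (q ^ (k - 1) * h + meanDegree Y) * degreeVariance Y / qNumber q (n - 2) := by
  have hq : (0 : ℚ) < q := by exact_mod_cast Nat.card_pos
  have centred := sum_deviation (Y := Y) (by omega)
  have pencil_gap : qNumber q (n - 1) - 1 = q * qNumber q (n - 2) := by
    rw [show n - 1 = n - 2 + 1 by omega, qNumber_succ', add_sub_cancel_right]
  rw [sum_mul_pointPart _ centred, pencil_gap, ← mul_div_mul_left _ (qNumber q (n - 2)) hq.ne',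
    ← mul_assoc]
  have := qNumber_nonneg q (n - 2)
  gcongr
  refine sum_pairForm_mul_sum_le centred hn (fun H hH ↦ ?_) fun P _ ↦ ?_
  · obtain ⟨hH, -⟩ := mem_subspaces.1 hH
    refine (sum_deviation_hyperplane_le hY hk hkn hH).trans ?_
    gcongr
    exact hh H hH
  · simp [deviation, degree]

lemma sum_pointPart_mul_degree_le (hY : ∀ R ∈ Y, finrank F R = k) (hk : 2 ≤ k) (hkn : 2 * k ≤ n)
    (hh : ∀ H : Submodule F V, finrank F H = n - 1 → codegree Y H ≤ h) (hh0 : 0 ≤ h) :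
    qNumber q (k - 1) * ∑ P ∈ points ⊤, pointPart (pairForm (deviation Y)) P * degree Y P ≤
      (h + meanDegree Y) * degreeVariance Y := by
  have hμ := meanDegree_nonneg (Y := Y)
  have hW := degreeVariance_nonneg (Y := Y)
  have hk₀ := qNumber_nonneg q (k - 1)
  have sum_nonpos : ∑ P ∈ points ⊤, pointPart (pairForm (deviation Y)) P ≤ 0 := by
    rw [sum_pointPart _ (by omega), sum_pairForm_lines, pairForm, sum_deviation (by omega)]
    exact div_nonpos_of_nonpos_of_nonneg (by simpa [degreeVariance] using hW) (qNumber_nonneg ..)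
  have split : ∑ P ∈ points ⊤, pointPart (pairForm (deviation Y)) P * degree Y P =
      ∑ P ∈ points ⊤, deviation Y P * pointPart (pairForm (deviation Y)) P +
        meanDegree Y * ∑ P ∈ points ⊤, pointPart (pairForm (deviation Y)) P := by
    rw [mul_sum, ← sum_add_distrib]
    refine sum_congr rfl fun P _ ↦ ?_
    rw [deviation]
    ring
  have ratio : qNumber q (k - 1) * (1 + q ^ (k - 1)) ≤ qNumber q (n - 2) := by
    rw [← qNumber_two_mul]
    exact qNumber_mono q (by omega)
  calc
    qNumber q (k - 1) * ∑ P ∈ points ⊤, pointPart (pairForm (deviation Y)) P * degree Y P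
        ≤ qNumber q (k - 1) *
          ((q ^ (k - 1) * h + meanDegree Y) * degreeVariance Y / qNumber q (n - 2)) := by
      gcongr
      rw [split]
      linarith [mul_nonpos_of_nonneg_of_nonpos hμ sum_nonpos,
        sum_deviation_mul_pointPart_le hY (by omega) (by omega) (by omega) hh]
    _ = qNumber q (k - 1) * (q ^ (k - 1) * h + meanDegree Y) / qNumber q (n - 2) *
          degreeVariance Y := by ring
    _ ≤ (h + meanDegree Y) * degreeVariance Y := by
      gcongr
      rw [div_le_iff₀ (qNumber_pos q (by omega))]
      have := mul_le_mul_of_nonneg_left ratio (add_nonneg hh0 hμ)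
      have : 0 ≤ qNumber q (k - 1) * h := by positivity
      have : 0 ≤ qNumber q (k - 1) * q ^ (k - 1) * meanDegree Y := by positivity
      linarith

lemma sum_linePart_le (hY : ∀ R ∈ Y, finrank F R = k) (hk : 4 ≤ k) (hkn : k ≤ n)
    (hT : q * (q + 1) * gaussBinom q (n - 2) (k - 2) * #Y ≤ T ^ 2) (hT0 : 0 ≤ T) :
    ∑ R ∈ Y, ∑ L ∈ lines R, linePart (pairForm (deviation Y)) L ≤ T * degreeVariance Y := by
  refine le_of_sq_le_sq ?_ (mul_nonneg hT0 degreeVariance_nonneg)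
  calc
    (∑ R ∈ Y, ∑ L ∈ lines R, linePart (pairForm (deviation Y)) L) ^ 2
        ≤ #Y * (gaussBinom q (n - 2) (k - 2) * ∑ L ∈ lines ⊤, pairForm (deviation Y) L ^ 2) :=
      sq_sum_sum_linePart_le _ hY hk hkn
    _ ≤ #Y * (gaussBinom q (n - 2) (k - 2) * (q * (q + 1) * degreeVariance Y ^ 2)) := by
      have := gaussBinom_nonneg (two_le_card (F := F)) (n - 2) (k - 2)
      gcongr
      exact sum_pairForm_sq_le _ _
    _ = q * (q + 1) * gaussBinom q (n - 2) (k - 2) * #Y * degreeVariance Y ^ 2 := by ring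
    _ ≤ (T * degreeVariance Y) ^ 2 := by
      rw [mul_pow]
      gcongr

lemma sum_sq_sum_deviation_le (hY : ∀ R ∈ Y, finrank F R = k) (hk : 4 ≤ k) (hkn : 2 * k ≤ n)
    (hp : ∀ P : Submodule F V, finrank F P = 1 → degree Y P ≤ p)
    (hh : ∀ H : Submodule F V, finrank F H = n - 1 → codegree Y H ≤ h) (hh0 : 0 ≤ h)
    (hT : q * (q + 1) * gaussBinom q (n - 2) (k - 2) * #Y ≤ T ^ 2) (hT0 : 0 ≤ T) :
    ∑ R ∈ Y, (∑ P ∈ points R, deviation Y P) ^ 2 ≤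
      (p + h + meanDegree Y + T) * degreeVariance Y := by
  have expand (R : Submodule F V) : (∑ P ∈ points R, deviation Y P) ^ 2 =
      ∑ P ∈ points R, deviation Y P ^ 2 + ∑ L ∈ lines R, pairForm (deviation Y) L := by
    rw [sum_pairForm_lines, pairForm]
    ring
  have diagonal : ∑ R ∈ Y, ∑ P ∈ points R, deviation Y P ^ 2 ≤ p * degreeVariance Y := by
    have := sum_mul_degree Y (j := 1) (B := ⊥) (E := ⊤) fun P ↦ deviation Y P ^ 2
    simp only [top_inf_eq] at this
    rw [← this, mul_comm, degreeVariance, sum_mul]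
    gcongr with P hP
    exact hp P (mem_subspaces.1 hP).1
  simp only [expand, sum_add_distrib]
  rw [sum_sum_lines_eq _ hY]
  linarith [sum_pointPart_mul_degree_le hY (by omega) hkn hh hh0,
    sum_linePart_le hY hk (by omega) hT hT0]

-- `T` measures the contribution of the line part.
theorem card_le_of_degree_le_of_codegree_le (hY : ∀ R ∈ Y, finrank F R = k)
    (hint : ∀ R ∈ Y, ∀ S ∈ Y, R ⊓ S ≠ ⊥) (hk : 4 ≤ k) (hkn : 2 * k ≤ n)
    (hp : ∀ P : Submodule F V, finrank F P = 1 → degree Y P ≤ p) (hp0 : 0 ≤ p)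
    (hh : ∀ H : Submodule F V, finrank F H = n - 1 → codegree Y H ≤ h) (hh0 : 0 ≤ h)
    (hT : q * (q + 1) * gaussBinom q (n - 2) (k - 2) * #Y ≤ T ^ 2) (hT0 : 0 ≤ T) :
    (1 - qNumber q k ^ 2 / qNumber q n) * #Y ≤ p + h + qNumber q k / qNumber q n * #Y + T := by
  rw [← meanDegree_eq hY]
  have lower := le_degreeVariance (by omega) hY hint
  have upper : degreeVariance Y ^ 2 ≤
      #Y * ((p + h + meanDegree Y + T) * degreeVariance Y) := by
    rw [← sum_sum_deviation (by omega)]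
    refine sq_sum_le_card_mul_sum_sq.trans ?_
    rw [sum_sum_deviation (by omega)]
    gcongr
    exact sum_sq_sum_deviation_le hY hk hkn hp hh hh0 hT hT0
  have rhs_nonneg : 0 ≤ p + h + meanDegree Y + T := by
    have := meanDegree_nonneg (Y := Y)
    positivity
  rcases Y.eq_empty_or_nonempty with rfl | hne
  · simpa using rhs_nonneg
  have hy : (0 : ℚ) < #Y := by exact_mod_cast hne.card_pos
  have : degreeVariance Y ≤ #Y * (p + h + meanDegree Y + T) := by
    rcases (degreeVariance_nonneg (Y := Y)).eq_or_lt' with hW | hW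
    · rw [hW]
      positivity
    · exact le_of_mul_le_mul_right (by linarith) hW
  exact le_of_mul_le_mul_right (by linarith) hy

end variance

section pencilDegree

variable {F V : Type*} [Field F] [AddCommGroup V] [Module F V] [Finite V]
variable {Y : Finset (Submodule F V)} {E P S : Submodule F V} {k : ℕ} {f : Submodule F V → ℚ}

local notation "q" => Nat.card F
local notation "n" => finrank F V

variable (Y P) in
/-- The number of members `R` of the family `Y` for which the line `L` through the point `P` lies in
`R ⊔ P`. When `P` is not in `R`, this means that `L` meets `R`. -/
noncomputable def pencilDegree (L : Submodule F V) : ℚ := #{R ∈ Y | L ≤ R ⊔ P}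

lemma sum_mul_pencilDegree (f : Submodule F V → ℚ) :
    ∑ L ∈ subspaces 2 P E, f L * pencilDegree Y P L =
      ∑ R ∈ Y, ∑ L ∈ subspaces 2 P (E ⊓ (R ⊔ P)), f L :=
  sum_mul_card_filter_le Y (· ⊔ P) f

lemma sum_pencilDegree :
    ∑ L ∈ subspaces 2 P E, pencilDegree Y P L =
      ∑ R ∈ Y, (#(subspaces 2 P (E ⊓ (R ⊔ P))) : ℚ) := by
  simpa using sum_mul_pencilDegree (Y := Y) (P := P) (E := E) 1

lemma finrank_sup_point (hP : finrank F P = 1) {R : Submodule F V} (hPR : ¬ P ≤ R) :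
    finrank F (R ⊔ P : Submodule F V) = finrank F R + 1 :=
  finrank_sup_eq_add_one bot_le bot_le (by rw [hP, finrank_bot]) hPR

lemma card_le_sum_pencilDegree (hP : finrank F P = 1) (hY : ∀ R ∈ Y, ¬ P ≤ R) (hPS : P ≤ S)
    (hS : ∀ R ∈ Y, S ⊓ R ≠ ⊥) : (#Y : ℚ) ≤ ∑ L ∈ subspaces 2 P S, pencilDegree Y P L := by
  rw [sum_pencilDegree, card_eq_sum_ones, Nat.cast_sum]
  refine sum_le_sum fun R hR ↦ Nat.cast_le.2 (card_pos.2 ?_)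
  obtain ⟨Q, hQ⟩ := points_nonempty (hS R hR)
  obtain ⟨hQ, -, hQSR⟩ := mem_subspaces.1 hQ
  obtain ⟨hQS, hQR⟩ := le_inf_iff.1 hQSR
  have hPQ : ¬ P ≤ Q := fun h ↦ hY R hR (h.trans hQR)
  refine ⟨Q ⊔ P, mem_subspaces.2 ⟨?_, le_sup_right, ?_⟩⟩
  · rw [finrank_sup_point hP hPQ, hQ]
  · exact le_inf (sup_le hQS hPS) (sup_le_sup_right hQR P)

variable [Finite F]

lemma card_filter_not_le (hP : finrank F P = 1) (hPE : P ≤ E) (hE : finrank F E = k + 1)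
    (hk : 1 ≤ k) : (#{R ∈ subspaces k ⊥ E | ¬ P ≤ R} : ℚ) = q ^ k := by
  have total := card_filter_add_card_filter_not (s := subspaces k ⊥ E) (P ≤ ·)
  rw [filter_ge_subspaces, bot_sup_eq] at total
  have total : (#(subspaces k P E) : ℚ) + #{R ∈ subspaces k ⊥ E | ¬ P ≤ R} =
    #(subspaces k ⊥ E) := by exact_mod_cast total
  rw [card_subspaces hPE hP hE hk, card_subspaces bot_le (finrank_bot F V) hE k.zero_le] at total
  obtain ⟨m, rfl⟩ := Nat.exists_eq_add_of_le' hk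
  rw [Nat.sub_zero, Nat.sub_zero, gaussBinom_succ_succ two_le_card m.le_succ,
    gaussBinom_self two_le_card, mul_one, Nat.add_sub_cancel] at total
  exact add_left_cancel total

lemma sum_sup_point_le {g : Submodule F V → ℚ} (hg : ∀ E, 0 ≤ g E) (hY : ∀ R ∈ Y, finrank F R = k)
    (hk : 1 ≤ k) (hP : finrank F P = 1) (hPY : ∀ R ∈ Y, ¬ P ≤ R) :
    ∑ R ∈ Y, g (R ⊔ P) ≤ q ^ k * ∑ E ∈ subspaces (k + 1) P ⊤, g E := by
  have maps : ∀ R ∈ Y, R ⊔ P ∈ subspaces (k + 1) P ⊤ := fun R hR ↦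
    mem_subspaces.2 ⟨by rw [finrank_sup_point hP (hPY R hR), hY R hR], le_sup_right, le_top⟩
  rw [← sum_fiberwise_of_maps_to maps, mul_sum]
  refine sum_le_sum fun E hE ↦ ?_
  obtain ⟨hE, hPE, -⟩ := mem_subspaces.1 hE
  have fibre_subset : {R ∈ Y | R ⊔ P = E} ⊆ {R ∈ subspaces k ⊥ E | ¬ P ≤ R} := by
    intro R hR
    obtain ⟨hRY, rfl⟩ := mem_filter.1 hR
    exact mem_filter.2 ⟨mem_subspaces.2 ⟨hY R hRY, bot_le, le_sup_left⟩, hPY R hRY⟩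
  calc
    ∑ R ∈ Y with R ⊔ P = E, g (R ⊔ P) = #{R ∈ Y | R ⊔ P = E} * g E := by
      rw [sum_congr rfl fun R hR ↦ by rw [(mem_filter.1 hR).2], sum_const, nsmul_eq_mul]
    _ ≤ q ^ k * g E := by
      refine mul_le_mul_of_nonneg_right ?_ (hg E)
      rw [← card_filter_not_le hP hPE hE hk]
      exact Nat.cast_le.2 (card_le_card fibre_subset)

lemma sum_sq_sum_sup_point_le (hY : ∀ R ∈ Y, finrank F R = k) (hk : 1 ≤ k) (hkn : k + 1 < n)
    (hP : finrank F P = 1) (hPY : ∀ R ∈ Y, ¬ P ≤ R) (hf : ∑ L ∈ subspaces 2 P ⊤, f L = 0) :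
    ∑ R ∈ Y, (∑ L ∈ subspaces 2 P (R ⊔ P), f L) ^ 2 ≤
      q ^ k * gaussBinom q (n - 2) (k - 1) * ∑ L ∈ subspaces 2 P ⊤, f L ^ 2 := by
  refine (sum_sup_point_le (g := fun E ↦ (∑ L ∈ subspaces 2 P E, f L) ^ 2) (fun _ ↦ sq_nonneg _) hY
    hk hP hPY).trans ?_
  rw [mul_assoc]
  gcongr
  exact sum_sq_sum_covers_le f hP (finrank_top F V) (by omega) hkn hf

lemma sum_pencilDegree_top (hY : ∀ R ∈ Y, finrank F R = k) (hP : finrank F P = 1)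
    (hPY : ∀ R ∈ Y, ¬ P ≤ R) :
    ∑ L ∈ subspaces 2 P ⊤, pencilDegree Y P L = qNumber q k * #Y := by
  have (R) (hR : R ∈ Y) : (#(subspaces 2 P (⊤ ⊓ (R ⊔ P))) : ℚ) = qNumber q k := by
    rw [top_inf_eq, card_covers le_sup_right hP (finrank_sup_point hP (hPY R hR)), hY R hR,
      Nat.add_sub_cancel]
  rw [sum_pencilDegree, sum_congr rfl this, sum_const, nsmul_eq_mul, mul_comm]

lemma sum_sq_le_of_pencilDegree (hY : ∀ R ∈ Y, finrank F R = k) (hk : 1 ≤ k) (hkn : k + 1 < n)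
    (hP : finrank F P = 1) (hPY : ∀ R ∈ Y, ¬ P ≤ R) {μ : ℚ}
    (hμ : ∑ L ∈ subspaces 2 P ⊤, (pencilDegree Y P L - μ) = 0) :
    ∑ L ∈ subspaces 2 P ⊤, (pencilDegree Y P L - μ) ^ 2 ≤
      q ^ k * gaussBinom q (n - 2) (k - 1) * #Y := by
  set f := fun L ↦ pencilDegree Y P L - μ
  set W := ∑ L ∈ subspaces 2 P ⊤, f L ^ 2
  have eq_sum : W = ∑ R ∈ Y, ∑ L ∈ subspaces 2 P (R ⊔ P), f L := by
    have expand (L : Submodule F V) : f L ^ 2 = f L * pencilDegree Y P L - μ * f L := by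
      simp only [f]
      ring
    simp only [W, expand, sum_sub_distrib, ← mul_sum, sum_mul_pencilDegree, hμ, top_inf_eq,
      mul_zero, sub_zero]
  have cauchy : W ^ 2 ≤ #Y * (q ^ k * gaussBinom q (n - 2) (k - 1) * W) := by
    nth_rw 1 [eq_sum]
    refine sq_sum_le_card_mul_sum_sq.trans ?_
    gcongr
    exact sum_sq_sum_sup_point_le hY hk hkn hP hPY hμ
  have := gaussBinom_nonneg (two_le_card (F := F)) (n - 2) (k - 1)
  rcases (show 0 ≤ W from sum_nonneg fun _ _ ↦ sq_nonneg _).eq_or_lt' with hW | hW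
  · rw [hW]
    positivity
  · exact le_of_mul_le_mul_right (by linarith) hW

lemma degree_mul_sq_le (hY : ∀ R ∈ Y, finrank F R = k) (hk : 2 ≤ k) (hkn : k < n)
    (hP : finrank F P = 1) (hf : ∑ L ∈ subspaces 2 P ⊤, f L = 0) {a : ℚ} (ha0 : 0 ≤ a)
    (ha : ∀ S ∈ Y, P ≤ S → a ≤ ∑ L ∈ subspaces 2 P S, f L) :
    degree Y P * a ^ 2 ≤ gaussBinom q (n - 2) (k - 2) * ∑ L ∈ subspaces 2 P ⊤, f L ^ 2 := by
  calc
    degree Y P * a ^ 2 = ∑ S ∈ Y with P ≤ S, a ^ 2 := by rw [sum_const, nsmul_eq_mul, degree]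
    _ ≤ ∑ S ∈ Y with P ≤ S, (∑ L ∈ subspaces 2 P S, f L) ^ 2 := by
      refine sum_le_sum fun S hS ↦ ?_
      obtain ⟨hS, hPS⟩ := mem_filter.1 hS
      exact pow_le_pow_left₀ ha0 (ha S hS hPS) 2
    _ ≤ ∑ S ∈ subspaces k P ⊤, (∑ L ∈ subspaces 2 P S, f L) ^ 2 := by
      refine sum_le_sum_of_subset_of_nonneg (fun S hS ↦ ?_) fun _ _ _ ↦ sq_nonneg _
      obtain ⟨hS, hPS⟩ := mem_filter.1 hS
      exact mem_subspaces.2 ⟨hY S hS, hPS, le_top⟩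
    _ ≤ _ := sum_sq_sum_covers_le f hP (finrank_top F V) (by omega) hkn hf

-- A member `S` through `P` meets all members avoiding `P`, so the pencil degrees of the latter are
-- above average on the lines of `S` through `P`; their variance limits how many `S` there are.
theorem degree_mul_card_filter_not_le (hY : ∀ R ∈ Y, finrank F R = k)
    (hint : ∀ R ∈ Y, ∀ S ∈ Y, R ⊓ S ≠ ⊥) (hk : 2 ≤ k) (hkn : k + 1 < n) (hP : finrank F P = 1)
    (hκ : qNumber q k * qNumber q (k - 1) / qNumber q (n - 1) ≤ 1) :
    degree Y P * #{R ∈ Y | ¬ P ≤ R} *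
        (1 - qNumber q k * qNumber q (k - 1) / qNumber q (n - 1)) ^ 2 ≤
      q ^ k * gaussBinom q (n - 2) (k - 1) * gaussBinom q (n - 2) (k - 2) := by
  set κ := qNumber q k * qNumber q (k - 1) / qNumber q (n - 1) with κ_eq
  set Z := {R ∈ Y | ¬ P ≤ R}
  have hZ : ∀ R ∈ Z, finrank F R = k := fun R hR ↦ hY R (mem_filter.1 hR).1
  have hPZ : ∀ R ∈ Z, ¬ P ≤ R := fun R hR ↦ (mem_filter.1 hR).2
  set μ := qNumber q k * #Z / qNumber q (n - 1) with μ_eq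
  have sum_sub_mean {S : Submodule F V} {e : ℕ} (hPS : P ≤ S) (hS : finrank F S = e) :
      ∑ L ∈ subspaces 2 P S, (pencilDegree Z P L - μ) =
        ∑ L ∈ subspaces 2 P S, pencilDegree Z P L - qNumber q (e - 1) * μ := by
    rw [sum_sub_distrib, sum_const, nsmul_eq_mul, card_covers hPS hP hS]
  have centred : ∑ L ∈ subspaces 2 P ⊤, (pencilDegree Z P L - μ) = 0 := by
    rw [sum_sub_mean le_top (finrank_top F V), sum_pencilDegree_top hZ hP hPZ,
      mul_div_cancel₀ _ (qNumber_pos q (by omega)).ne', sub_self]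
  have lower := degree_mul_sq_le hY hk (by omega) hP centred
    (mul_nonneg (Nat.cast_nonneg #Z) (sub_nonneg.2 hκ)) fun S hS hPS ↦ by
      have := card_le_sum_pencilDegree hP hPZ hPS fun R hR ↦ hint S hS R (mem_filter.1 hR).1
      have mean : qNumber q (k - 1) * μ = #Z * κ := by
        rw [μ_eq, κ_eq]
        ring
      rw [sum_sub_mean hPS (hY S hS), mean]
      linarith
  have upper := sum_sq_le_of_pencilDegree hZ (by omega) hkn hP hPZ centred
  have hc := gaussBinom_nonneg (two_le_card (F := F)) (n - 2) (k - 2)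
  have hc' := gaussBinom_nonneg (two_le_card (F := F)) (n - 2) (k - 1)
  rcases Z.eq_empty_or_nonempty with hZ | hZ
  · rw [hZ, card_empty, Nat.cast_zero, mul_zero, zero_mul]
    positivity
  · refine le_of_mul_le_mul_right ?_ (Nat.cast_pos.2 hZ.card_pos : (0 : ℚ) < #Z)
    linarith [lower.trans (mul_le_mul_of_nonneg_left upper hc)]

lemma degree_le_of_exists_not_le (hY : ∀ R ∈ Y, finrank F R = k) (hk : 2 ≤ k) (hP : finrank F P = 1)
    (hint : ∀ R ∈ Y, R ⊓ S ≠ ⊥) (hS : finrank F S = k) (hPS : ¬ P ≤ S) :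
    degree Y P ≤ qNumber q k * gaussBinom q (n - 2) (k - 2) := by
  have subset : {R ∈ Y | P ≤ R} ⊆ (points S).biUnion fun Q ↦ subspaces k (Q ⊔ P) ⊤ := by
    intro R hR
    obtain ⟨hR, hPR⟩ := mem_filter.1 hR
    obtain ⟨Q, hQ⟩ := points_nonempty (hint R hR)
    obtain ⟨hQ, -, hQRS⟩ := mem_subspaces.1 hQ
    obtain ⟨hQR, hQS⟩ := le_inf_iff.1 hQRS
    exact mem_biUnion.2 ⟨Q, mem_subspaces.2 ⟨hQ, bot_le, hQS⟩,
      mem_subspaces.2 ⟨hY R hR, sup_le hQR hPR, le_top⟩⟩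
  calc
    degree Y P ≤ ∑ Q ∈ points S, (#(subspaces k (Q ⊔ P) ⊤) : ℚ) := by
      rw [degree]
      exact_mod_cast (card_le_card subset).trans card_biUnion_le
    _ = ∑ Q ∈ points S, gaussBinom q (n - 2) (k - 2) := by
      refine sum_congr rfl fun Q hQ ↦ ?_
      obtain ⟨hQ, -, hQS⟩ := mem_subspaces.1 hQ
      have hPQ : ¬ P ≤ Q := fun h ↦ hPS (h.trans hQS)
      exact card_subspaces le_top (by rw [finrank_sup_point hP hPQ, hQ]) (finrank_top F V) hk
    _ = qNumber q k * gaussBinom q (n - 2) (k - 2) := by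
      rw [sum_const, nsmul_eq_mul, card_points hS]

end pencilDegree

section numerics

variable {q k : ℕ}

lemma two_mul_qNumber_le_pow (hq : 3 ≤ q) (k : ℕ) : 2 * qNumber q k ≤ q ^ k := by
  have hq : (3 : ℚ) ≤ q := by exact_mod_cast hq
  have := mul_le_mul_of_nonneg_right (show (2 : ℚ) ≤ q - 1 by linarith) (qNumber_nonneg q k)
  linarith [sub_one_mul_qNumber q k]

lemma pow_le_qNumber_succ (n : ℕ) : (q : ℚ) ^ n ≤ qNumber q (n + 1) := by
  rw [qNumber_succ]
  exact le_add_of_nonneg_left (qNumber_nonneg ..)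

lemma cube_mul_succ_le_qNumber (hk : 5 ≤ k) : (q : ℚ) ^ 3 * (q + 1) ≤ qNumber q k := by
  refine le_trans ?_ (qNumber_mono q hk)
  have : (0 : ℚ) ≤ q ^ 2 + q + 1 := by positivity
  simp only [qNumber_succ, qNumber_zero]
  linarith

lemma qNumber_mul_qNumber_div_le_half (hq : 3 ≤ q) (hk : 1 ≤ k) :
    qNumber q k * qNumber q (k - 1) / qNumber q (2 * k - 1) ≤ 1 / 2 := by
  rw [div_le_iff₀ (qNumber_pos q (by omega)), show 2 * k - 1 = k + (k - 1) by omega, qNumber_add]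
  linarith [mul_le_mul_of_nonneg_right (two_mul_qNumber_le_pow hq k) (qNumber_nonneg q (k - 1)),
    qNumber_nonneg q k]

lemma sq_qNumber_div_le_half (hq : 3 ≤ q) (k : ℕ) :
    qNumber q k ^ 2 / qNumber q (2 * k) ≤ 1 / 2 := by
  have := mul_le_mul_of_nonneg_right (two_mul_qNumber_le_pow hq k) (qNumber_nonneg q k)
  refine div_le_of_le_mul₀ (qNumber_nonneg ..) (by norm_num) ?_
  rw [qNumber_two_mul]
  linarith [qNumber_nonneg q k]

lemma qNumber_div_lt (hq : 3 ≤ q) (hk : 3 ≤ k) : qNumber q k / qNumber q (2 * k) < 1 / 20 := by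
  have : (3 : ℚ) ^ 3 ≤ q ^ k := by
    exact_mod_cast (Nat.pow_le_pow_left hq 3).trans (Nat.pow_le_pow_right (by omega) hk)
  rw [qNumber_two_mul, ← div_div, div_self (qNumber_pos q (by omega)).ne']
  exact one_div_lt_one_div_of_lt (by norm_num) (by linarith)

lemma pow_mul_gaussBinom_central_le (hq : 2 ≤ q) (hk : 2 ≤ k) :
    q ^ k * gaussBinom q (2 * k - 2) (k - 1) ≤
      q ^ 2 * (qNumber q k * gaussBinom q (2 * k - 2) (k - 2)) := by
  obtain ⟨m, rfl⟩ := Nat.exists_eq_add_of_le' hk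
  have h := gaussBinom_succ_mul hq (2 * (m + 2) - 2) m
  rw [show 2 * (m + 2) - 2 - m = m + 2 by omega] at h
  have := gaussBinom_nonneg hq (2 * (m + 2) - 2) (m + 1)
  calc
    (q : ℚ) ^ (m + 2) * gaussBinom q (2 * (m + 2) - 2) (m + 1)
        = q ^ 2 * (gaussBinom q (2 * (m + 2) - 2) (m + 1) * q ^ m) := by ring
    _ ≤ q ^ 2 * (gaussBinom q (2 * (m + 2) - 2) (m + 1) * qNumber q (m + 1)) := by
      gcongr
      exact pow_le_qNumber_succ m
    _ = _ := by rw [h, Nat.add_sub_cancel, mul_comm (gaussBinom ..)]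

lemma mul_gaussBinom_le_of_le (hq : 3 ≤ q) (hk : 5 ≤ k) {y : ℚ}
    (hy : (q + 3) * (qNumber q k * gaussBinom q (2 * k - 2) (k - 2)) ≤ q * y) :
    18 * (q * (q + 1) * gaussBinom q (2 * k - 2) (k - 2)) ≤ y := by
  have hq₃ : (3 : ℚ) ≤ q := by exact_mod_cast hq
  have hc := gaussBinom_nonneg (show 2 ≤ q by omega) (2 * k - 2) (k - 2)
  refine le_of_mul_le_mul_left ?_ (by positivity : (0 : ℚ) < q)
  calc
    q * (18 * (q * (q + 1) * gaussBinom q (2 * k - 2) (k - 2)))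
        ≤ q * (q * (q + 3) * (q * (q + 1) * gaussBinom q (2 * k - 2) (k - 2))) := by
      gcongr
      nlinarith
    _ = (q + 3) * (q ^ 3 * (q + 1) * gaussBinom q (2 * k - 2) (k - 2)) := by ring
    _ ≤ (q + 3) * (qNumber q k * gaussBinom q (2 * k - 2) (k - 2)) := by
      gcongr
      exact cube_mul_succ_le_qNumber hk
    _ ≤ q * y := hy

-- A small product `d * (y - d)` forces `d` to be close to `0` or to `y`; the bound `e` on `d` rules
-- out the latter.
lemma le_div_ten_of_mul_sub_le {x d e y : ℚ} (hx : 3 ≤ x) (hd : 0 ≤ d) (hde : d ≤ e) (hy : 0 < y)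
    (hey : (x + 3) * e ≤ x * y) (h : x * (x + 1) * (d * (y - d)) ≤ 4 * e ^ 2) : d ≤ y / 10 := by
  have : 0 < x := by linarith
  have he : 0 ≤ e := hd.trans hde
  have product_le : 2 * (x + 3) * (d * (y - d)) ≤ y ^ 2 := by
    refine le_of_mul_le_mul_left ?_ (by positivity : 0 < x * (x + 1) * (x + 3))
    calc
      x * (x + 1) * (x + 3) * (2 * (x + 3) * (d * (y - d)))
          = 2 * (x + 3) ^ 2 * (x * (x + 1) * (d * (y - d))) := by ring
      _ ≤ 2 * (x + 3) ^ 2 * (4 * e ^ 2) := by gcongr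
      _ = 8 * ((x + 3) * e) ^ 2 := by ring
      _ ≤ 8 * (x * y) ^ 2 := by gcongr
      _ = x * (8 * x) * y ^ 2 := by ring
      _ ≤ x * ((x + 1) * (x + 3)) * y ^ 2 := by
        have := mul_nonneg (show 0 ≤ x - 1 by linarith) (sub_nonneg.2 hx)
        gcongr x * ?_ * y ^ 2
        linarith
      _ = x * (x + 1) * (x + 3) * y ^ 2 := by ring
  have d_le : d ≤ y / 6 := by
    have : 3 * y ≤ (x + 3) * (y - d) := by
      linarith [mul_le_mul_of_nonneg_left hde (show 0 ≤ x + 3 by linarith)]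
    have := mul_le_mul_of_nonneg_left this hd
    refine le_of_mul_le_mul_right ?_ hy
    linarith
  have : 12 * (d * (y - d)) ≤ y ^ 2 := by
    have : 0 ≤ (x - 3) * (d * (y - d)) :=
      mul_nonneg (by linarith) (mul_nonneg hd (by linarith))
    linarith
  by_contra! h
  nlinarith

end numerics

section duality

variable {F V : Type*} [Field F] [AddCommGroup V] [Module F V]
variable {Y : Finset (Submodule F V)} {R S : Submodule F V}

variable (Y) in
/-- The family of the annihilators of the members of `Y`, in the dual space. It exchanges degrees
and codegrees. -/
noncomputable def annihilators : Finset (Submodule F (Dual F V)) :=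
  Y.image fun R ↦ R.dualAnnihilator

lemma dualAnnihilator_injective :
    Function.Injective fun R : Submodule F V ↦ R.dualAnnihilator := fun _ _ ↦
  Subspace.dualAnnihilator_inj.1

lemma card_annihilators : #(annihilators Y) = #Y :=
  card_image_of_injective _ dualAnnihilator_injective

lemma degree_annihilators (H : Submodule F V) :
    degree (annihilators Y) H.dualAnnihilator = codegree Y H := by
  rw [degree, codegree, annihilators, filter_image,
    card_image_of_injective _ dualAnnihilator_injective]
  simp only [Subspace.dualAnnihilator_le_dualAnnihilator_iff]

variable [FiniteDimensional F V]

lemma finrank_dualAnnihilator (R : Submodule F V) :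
    finrank F R.dualAnnihilator = finrank F V - finrank F R := by
  have := Subspace.finrank_add_finrank_dualAnnihilator_eq R
  omega

lemma dualAnnihilator_inf_ne_bot (hRS : R ⊓ S ≠ ⊥)
    (h : finrank F R + finrank F S ≤ finrank F V) :
    R.dualAnnihilator ⊓ S.dualAnnihilator ≠ ⊥ := by
  rw [← Submodule.dualAnnihilator_sup_eq, Ne, Submodule.dualAnnihilator_eq_bot_iff]
  intro hsup
  have := Submodule.finrank_sup_add_finrank_inf_eq R S
  rw [hsup, finrank_top] at this
  exact hRS (Submodule.finrank_eq_zero.1 (by omega))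

end duality

section main

variable {F V : Type*} [Field F] [Finite F] [AddCommGroup V] [Module F V] [Finite V]
variable {Y : Finset (Submodule F V)} {H P S : Submodule F V} {k : ℕ}

local notation "q" => Nat.card F
local notation "n" => finrank F V

lemma degree_le_card_div_ten (hq : 3 ≤ q) (hk : 5 ≤ k) (hn : n = 2 * k)
    (hY : ∀ R ∈ Y, finrank F R = k) (hint : ∀ R ∈ Y, ∀ S ∈ Y, R ⊓ S ≠ ⊥)
    (hlarge : (q + 3) * (qNumber q k * gaussBinom q (2 * k - 2) (k - 2)) ≤ q * #Y)
    (hP : finrank F P = 1) (hS : S ∈ Y) (hPS : ¬ P ≤ S) : degree Y P ≤ #Y / 10 := by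
  have hq₃ : (3 : ℚ) ≤ q := by exact_mod_cast hq
  set c := gaussBinom q (2 * k - 2) (k - 2)
  have hc : 0 ≤ c := gaussBinom_nonneg two_le_card _ _
  have degree_le : degree Y P ≤ qNumber q k * c := by
    have := degree_le_of_exists_not_le hY (by omega) hP (fun R hR ↦ hint R hR S hS) (hY S hS) hPS
    rwa [hn] at this
  have card_not : (#{R ∈ Y | ¬ P ≤ R} : ℚ) = #Y - degree Y P := by
    rw [degree, eq_sub_iff_add_eq', ← Nat.cast_add, card_filter_add_card_filter_not]
  have product_le : degree Y P * (#Y - degree Y P) ≤ 4 * (q ^ 2 * (qNumber q k * c) * c) := by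
    have hκ := qNumber_mul_qNumber_div_le_half hq (show 1 ≤ k by omega)
    have second_moment := degree_mul_card_filter_not_le hY hint (by omega) (by omega) hP
      (by rw [hn]; linarith)
    rw [hn, card_not] at second_moment
    have quarter_le : (1 / 2) ^ 2 ≤
        (1 - qNumber q k * qNumber q (k - 1) / qNumber q (2 * k - 1)) ^ 2 :=
      pow_le_pow_left₀ (by norm_num) (by linarith) 2
    have nonneg : 0 ≤ degree Y P * (#Y - degree Y P) := by
      rw [← card_not, degree]
      positivity
    have := mul_le_mul_of_nonneg_right (pow_mul_gaussBinom_central_le (two_le_card (F := F))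
      (show 2 ≤ k by omega)) hc
    linarith [mul_le_mul_of_nonneg_left quarter_le nonneg]
  refine le_div_ten_of_mul_sub_le hq₃ (Nat.cast_nonneg _) degree_le
    (Nat.cast_pos.2 (card_pos.2 ⟨S, hS⟩)) hlarge ?_
  calc
    q * (q + 1) * (degree Y P * (#Y - degree Y P))
        ≤ q * (q + 1) * (4 * (q ^ 2 * (qNumber q k * c) * c)) := by gcongr
    _ = 4 * (qNumber q k * c) * ((q ^ 3 * (q + 1)) * c) := by ring
    _ ≤ 4 * (qNumber q k * c) * (qNumber q k * c) := by
      have := qNumber_nonneg q k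
      gcongr
      exact cube_mul_succ_le_qNumber hk
    _ = 4 * (qNumber q k * c) ^ 2 := by ring

lemma codegree_le_card_div_ten (hq : 3 ≤ q) (hk : 5 ≤ k) (hn : n = 2 * k)
    (hY : ∀ R ∈ Y, finrank F R = k) (hint : ∀ R ∈ Y, ∀ S ∈ Y, R ⊓ S ≠ ⊥)
    (hlarge : (q + 3) * (qNumber q k * gaussBinom q (2 * k - 2) (k - 2)) ≤ q * #Y)
    (hH : finrank F H = 2 * k - 1) (hS : S ∈ Y) (hSH : ¬ S ≤ H) : codegree Y H ≤ #Y / 10 := by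
  have : Finite (Dual F V) := Module.finite_of_finite F
  rw [← degree_annihilators, ← card_annihilators]
  refine degree_le_card_div_ten hq hk (hn ▸ Subspace.dual_finrank_eq) ?_ ?_ ?_ ?_
    (mem_image_of_mem _ hS) (by rwa [Subspace.dualAnnihilator_le_dualAnnihilator_iff])
  · intro R' hR'
    obtain ⟨R, hR, rfl⟩ := mem_image.1 hR'
    rw [finrank_dualAnnihilator, hY R hR]
    omega
  · intro R' hR' S' hS'
    obtain ⟨R, hR, rfl⟩ := mem_image.1 hR'
    obtain ⟨S, hS, rfl⟩ := mem_image.1 hS'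
    refine dualAnnihilator_inf_ne_bot (hint R hR S hS) ?_
    rw [hY R hR, hY S hS, hn, two_mul]
  · rwa [card_annihilators]
  · rw [finrank_dualAnnihilator, hH, hn]
    omega

lemma card_mul_card_lt (hq : 3 ≤ q) (hk : 5 ≤ k) (hn : n = 2 * k) (hY : ∀ R ∈ Y, finrank F R = k)
    (hint : ∀ R ∈ Y, ∀ S ∈ Y, R ⊓ S ≠ ⊥) (hY₀ : Y.Nonempty)
    (hdict : ∀ P : Submodule F V, finrank F P = 1 → ∃ S ∈ Y, ¬ P ≤ S)
    (hdual : ∀ H : Submodule F V, finrank F H = 2 * k - 1 → ∃ S ∈ Y, ¬ S ≤ H) :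
    q * #Y < (q + 3) * (qNumber q k * gaussBinom q (2 * k - 2) (k - 2)) := by
  by_contra! hlarge
  have hy : (0 : ℚ) < #Y := by exact_mod_cast hY₀.card_pos
  have light_points (P : Submodule F V) (hP : finrank F P = 1) : degree Y P ≤ #Y / 10 := by
    obtain ⟨S, hS, hPS⟩ := hdict P hP
    exact degree_le_card_div_ten hq hk hn hY hint hlarge hP hS hPS
  have light_hyperplanes (H : Submodule F V) (hH : finrank F H = n - 1) :
      codegree Y H ≤ #Y / 10 := by
    rw [hn] at hH
    obtain ⟨S, hS, hSH⟩ := hdual H hH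
    exact codegree_le_card_div_ten hq hk hn hY hint hlarge hH hS hSH
  have line_term : q * (q + 1) * gaussBinom q (n - 2) (k - 2) * #Y ≤ (#Y / 4 : ℚ) ^ 2 := by
    rw [hn, div_pow]
    linarith [mul_le_mul_of_nonneg_right (mul_gaussBinom_le_of_le hq hk hlarge) hy.le,
      sq_nonneg (#Y : ℚ)]
  have spectral := card_le_of_degree_le_of_codegree_le hY hint (by omega) hn.ge light_points
    (by positivity) light_hyperplanes (by positivity) line_term (by positivity)
  rw [hn] at spectral
  linarith [mul_le_mul_of_nonneg_right (sq_qNumber_div_le_half hq k) hy.le,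
    mul_lt_mul_of_pos_right (qNumber_div_lt hq (show 3 ≤ k by omega)) hy]

end main

end WeakHiltonMilner

open WeakHiltonMilner in
theorem weak_hilton_milner_general {F V : Type*} [Field F] [Finite F] [AddCommGroup V] [Module F V]
    {k : ℕ} (hq : 3 ≤ Nat.card F) (hk : 5 ≤ k) (hn : Module.finrank F V = 2 * k)
    (Y : Set (Submodule F V)) (hY : ∀ R ∈ Y, Module.finrank F R = k)
    (hint : ∀ R ∈ Y, ∀ S ∈ Y, R ⊓ S ≠ ⊥)
    (hdict : ¬ ∃ P : Submodule F V, Module.finrank F P = 1 ∧ ∀ R ∈ Y, P ≤ R)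
    (hdual : ¬ ∃ H : Submodule F V, Module.finrank F H = 2 * k - 1 ∧ ∀ R ∈ Y, R ≤ H) :
    (Nat.card Y : ℚ) < (1 + 3 / (Nat.card F : ℚ)) * gaussBinom (Nat.card F) k 1 *
      gaussBinom (Nat.card F) (2 * k - 2) (k - 2) := by
  have : FiniteDimensional F V := Module.finite_of_finrank_pos (by omega)
  have : Finite V := Module.finite_of_finite F
  lift Y to Finset (Submodule F V) using Y.toFinite
  simp only [Finset.mem_coe] at hY hint
  push Not at hdict hdual
  have : Nontrivial V := Module.nontrivial_of_finrank_pos (R := F) (by omega)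
  obtain ⟨P, hP⟩ := points_nonempty (top_ne_bot (α := Submodule F V))
  obtain ⟨S, hS, -⟩ := hdict P (mem_subspaces.1 hP).1
  have card_lt := card_mul_card_lt hq hk hn hY hint ⟨S, hS⟩ hdict hdual
  have q_pos : (0 : ℚ) < Nat.card F := by exact_mod_cast (show 0 < 3 by norm_num).trans_le hq
  rw [gaussBinom_one_right two_le_card, Nat.card_coe_set_eq, Set.ncard_coe_finset,
    one_add_div q_pos.ne', mul_assoc, div_mul_eq_mul_div, lt_div_iff₀' q_pos]
  exact card_lt

/-- Theorem 1.5 (weak Hilton–Milner): for `q ≥ 3` and `k ≥ 5`, every independent set `Y` of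
the `q`-Kneser graph `qK_{2k:k}` (i.e. intersecting family of `k`-spaces of `F_q^{2k}`)
that is not contained in a dictator nor in the dual of a dictator satisfies
`|Y| < (1 + 3/q)·[k choose 1]_q·[2k-2 choose k-2]_q`. -/
theorem weak_hilton_milner (q k : ℕ) (hq3 : 3 ≤ q) (hq : IsPrimePow q) (hk : 5 ≤ k)
    (F : Type) [Field F] [Fintype F] (hF : Fintype.card F = q)
    (Y : Set (Submodule F (Fin (2 * k) → F)))
    (hdim : ∀ R ∈ Y, Module.finrank F R = k)
    (hint : ∀ R ∈ Y, ∀ S ∈ Y, R ⊓ S ≠ ⊥)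
    (hdict : ¬ ∃ p : Submodule F (Fin (2 * k) → F), Module.finrank F p = 1 ∧ ∀ R ∈ Y, p ≤ R)
    (hdual : ¬ ∃ H : Submodule F (Fin (2 * k) → F),
      Module.finrank F H = 2 * k - 1 ∧ ∀ R ∈ Y, R ≤ H) :
    (Nat.card Y : ℚ) <
      (1 + 3 / (q : ℚ)) * gaussBinom q k 1 * gaussBinom q (2 * k - 2) (k - 2) := by
  subst hF
  rw [Fintype.card_eq_nat_card] at hq3 ⊢
  exact weak_hilton_milner_general hq3 hk (Module.finrank_fin_fun F) Y hdim hint hdict hdual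
end

section
/- Let q ≥ 4 and k ≥ 4. Every independent set Y of the q-Kneser graph qK_{2k:k} that is not contained in a dictator nor in the dual of a dictator satisfies |Y| < 3·[k choose 1]_q·[2k−2 choose k−2]_q. -/
/-!
Let `deg P` be the number of members of `Y` through the point `P`, and `deg H` the number of members
inside the hyperplane `H`. Passing to annihilators in the dual space exchanges points and
hyperplanes and preserves the intersecting property, since `k`-spaces of a `2k`-space meet trivially
iff they span. So a point `P` may be assumed to have maximal degree among all points and
hyperplanes. Split `Y` into the family `A` of members through `P` and the family `Z` of the others,
and put `D = [k]_q · [2k-2 choose k-2]_q`.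

* *`Z` is small.* Weight each hyperplane through `P` by the number of members of `Z` it contains;
  by maximality no weight exceeds `|A|`. Every `R ∈ A` spans a proper subspace with every `S ∈ Z`,
  so the hyperplanes containing `R` carry total weight at least `|Z|`. The `k`-spaces through `P`
  carry at most a third of that on average, and any two hyperplanes through `P` contain the same
  number of them, so the second moment of the weight is explicit and few `k`-spaces can deviate that
  much:
  `|A| · (2/3)² · |Z|² ≤ |A| · |Z| · D`, whence `|Z| ≤ 9/4 · D`.
* *`A` is small.* Fix `U ∈ Z`. If some `S ∈ Z` is not contained in `P + U`, then every `R ∈ A` meets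
  `S` in a point of the space `S ∩ (P + U)`, of dimension less than `k`, or in a point `Q` outside
  `P + U`; in the latter case `R` also meets `U`, in a point outside `P + Q`. Counting gives
  `|A| ≤ 7/12 · D`, and `9/4 + 7/12 < 3`. If all of `Z` lies in `P + U`, then `|Z| ≤ [k+1]_q < 2D`
  and `|A| ≤ D`.
-/

section WeakHiltonMilner

open Finset Module Submodule

/-- The `q`-number `[n]_q = 1 + q + ⋯ + q^(n-1)`, which counts the points of an `n`-dimensional
space over the field with `q` elements. -/
def qNum (q n : ℕ) : ℚ := ∑ i ∈ range n, (q : ℚ) ^ i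

section QNumbers

variable {q : ℕ}

lemma qNum_succ (n : ℕ) : qNum q (n + 1) = q * qNum q n + 1 := geom_sum_succ

lemma qNum_add (m n : ℕ) : qNum q (m + n) = qNum q m + (q : ℚ) ^ m * qNum q n := by
  simp only [qNum, sum_range_add, mul_sum, pow_add]

lemma qNum_mul_sub_one (n : ℕ) : qNum q n * (q - 1) = (q : ℚ) ^ n - 1 := geom_sum_mul _ _

lemma qNum_nonneg (n : ℕ) : 0 ≤ qNum q n := sum_nonneg fun _ _ => by positivity

lemma qNum_mono : Monotone (qNum q) := fun _ _ h =>
  sum_le_sum_of_subset_of_nonneg (range_mono h) fun _ _ _ => by positivity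

lemma qNum_one : qNum q 1 = 1 := by simp [qNum]

lemma qNum_pos {n : ℕ} (hn : 0 < n) : 0 < qNum q n :=
  zero_lt_one.trans_le (qNum_one.symm.trans_le (qNum_mono hn))

lemma sub_one_mul_qNum_mul_qNum_le (m n : ℕ) :
    (q - 1) * (qNum q m * qNum q n) ≤ qNum q (m + n) := by
  linear_combination qNum q n * qNum_mul_sub_one (q := q) m - qNum_add (q := q) m n +
    qNum_nonneg (q := q) m + qNum_nonneg (q := q) n

lemma qNum_mul_qNum_succ_le {m n : ℕ} (h : m ≤ n) :
    qNum q m * qNum q (n + 1) ≤ qNum q (m + 1) * qNum q n := by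
  rw [qNum_succ, qNum_succ]
  linear_combination qNum_mono (q := q) h

lemma gaussBinom_eq_prod (hq : 1 < q) (n k : ℕ) :
    gaussBinom q n k = ∏ i ∈ range k, qNum q (n - i) / qNum q (i + 1) := by
  have hq' : (q : ℚ) - 1 ≠ 0 := sub_ne_zero.mpr (by exact_mod_cast hq.ne')
  simp only [gaussBinom, ← qNum_mul_sub_one, mul_div_mul_right _ _ hq']

lemma gaussBinom_zero_right (n : ℕ) : gaussBinom q n 0 = 1 := rfl

lemma gaussBinom_one_right (hq : 1 < q) (n : ℕ) : gaussBinom q n 1 = qNum q n := by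
  simp [gaussBinom_eq_prod hq, qNum_one]

lemma gaussBinom_nonneg (hq : 1 < q) (n k : ℕ) : 0 ≤ gaussBinom q n k :=
  gaussBinom_eq_prod hq n k ▸ prod_nonneg fun _ _ => div_nonneg (qNum_nonneg _) (qNum_nonneg _)

lemma gaussBinom_succ_mul_qNum (hq : 1 < q) (n k : ℕ) :
    gaussBinom q n (k + 1) * qNum q (k + 1) = gaussBinom q n k * qNum q (n - k) := by
  rw [gaussBinom_eq_prod hq, gaussBinom_eq_prod hq, prod_range_succ, mul_assoc,
    div_mul_cancel₀ _ (qNum_pos k.succ_pos).ne']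

lemma qNum_mul_gaussBinom_pred (hq : 1 < q) (n k : ℕ) :
    qNum q n * gaussBinom q (n - 1) k = gaussBinom q n k * qNum q (n - k) := by
  induction k with
  | zero => rw [gaussBinom_zero_right, gaussBinom_zero_right, mul_comm, Nat.sub_zero]
  | succ k ih =>
    have hpred := gaussBinom_succ_mul_qNum hq (n - 1) k
    rw [show n - 1 - k = n - (k + 1) by omega] at hpred
    refine mul_right_cancel₀ (qNum_pos (q := q) k.succ_pos).ne' ?_
    linear_combination qNum q n * hpred + qNum q (n - (k + 1)) * ih -
      qNum q (n - (k + 1)) * gaussBinom_succ_mul_qNum hq n k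

lemma gaussBinom_succ_mul_qNum_pred (hq : 1 < q) (n k : ℕ) :
    gaussBinom q n (k + 1) * qNum q (k + 1) = qNum q n * gaussBinom q (n - 1) k := by
  rw [gaussBinom_succ_mul_qNum hq, qNum_mul_gaussBinom_pred hq]

lemma gaussBinom_self (hq : 1 < q) (n : ℕ) : gaussBinom q n n = 1 := by
  induction n with
  | zero => exact gaussBinom_zero_right 0
  | succ n ih =>
    have h := gaussBinom_succ_mul_qNum_pred hq (n + 1) n
    rw [Nat.add_sub_cancel, ih, mul_one] at h
    exact (mul_eq_right₀ (qNum_pos n.succ_pos).ne').mp h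

lemma gaussBinom_succ_self (hq : 1 < q) (n : ℕ) : gaussBinom q (n + 1) n = qNum q (n + 1) := by
  have h := gaussBinom_succ_mul_qNum hq (n + 1) n
  rwa [gaussBinom_self hq, one_mul, Nat.add_sub_cancel_left, qNum_one, mul_one, eq_comm] at h

lemma one_le_gaussBinom (hq : 1 < q) {n k : ℕ} (h : k ≤ n) : 1 ≤ gaussBinom q n k := by
  induction k generalizing n with
  | zero => exact (gaussBinom_zero_right n).ge
  | succ k ih =>
    refine le_of_mul_le_mul_right ?_ (qNum_pos k.succ_pos : 0 < qNum q (k + 1))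
    rw [gaussBinom_succ_mul_qNum_pred hq, one_mul]
    exact (qNum_mono h).trans (le_mul_of_one_le_right (qNum_nonneg n) (ih (by omega)))

lemma gaussBinom_eq_zero_of_lt {n k : ℕ} (h : n < k) : gaussBinom q n k = 0 :=
  prod_eq_zero (mem_range.mpr h) (by simp)

lemma gaussBinom_mul_gaussBinom_le_sq (hq : 1 < q) (n k : ℕ) :
    gaussBinom q n k * gaussBinom q (n + 2) k ≤ gaussBinom q (n + 1) k ^ 2 := by
  obtain hnk | hkn := lt_or_ge n k
  · rw [gaussBinom_eq_zero_of_lt hnk, zero_mul]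
    positivity
  have h₁ := qNum_mul_gaussBinom_pred hq (n + 1) k
  have h₂ := qNum_mul_gaussBinom_pred hq (n + 2) k
  rw [Nat.add_sub_cancel, show n + 1 - k = n - k + 1 by omega] at h₁
  rw [show n + 2 - 1 = n + 1 by omega, show n + 2 - k = n - k + 1 + 1 by omega] at h₂
  have hpos : 0 < qNum q (n + 1) * qNum q (n - k + 1 + 1) :=
    mul_pos (qNum_pos n.succ_pos) (qNum_pos (n - k + 1).succ_pos)
  refine le_of_mul_le_mul_right ?_ hpos
  calc gaussBinom q n k * gaussBinom q (n + 2) k * (qNum q (n + 1) * qNum q (n - k + 1 + 1))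
      = gaussBinom q (n + 1) k ^ 2 * (qNum q (n - k + 1) * qNum q (n + 2)) := by
        linear_combination gaussBinom q (n + 2) k * qNum q (n - k + 1 + 1) * h₁ -
          gaussBinom q (n + 1) k * qNum q (n - k + 1) * h₂
    _ ≤ gaussBinom q (n + 1) k ^ 2 * (qNum q (n - k + 1 + 1) * qNum q (n + 1)) := by
        gcongr ?_ * ?_
        exact qNum_mul_qNum_succ_le (by omega)
    _ = _ := by ring

end QNumbers

section PairBalanced

variable {α β R : Type*}

/-- Every point of `X` lies in exactly `r` of the blocks `B`, and every two distinct points in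
exactly `l` of them. This is a `2`-design without the requirement that blocks have equal size; the
numbers `r` and `l` live in a ring so that they can be given by closed formulas. -/
structure IsPairBalanced [NatCast R] (B : Finset α) (X : Finset β) (I : α → β → Prop)
    [∀ b x, Decidable (I b x)] (r l : R) : Prop where
  card_point : ∀ x ∈ X, (#{b ∈ B | I b x} : R) = r
  card_pair : ∀ x ∈ X, ∀ y ∈ X, x ≠ y → (#{b ∈ B | I b x ∧ I b y} : R) = l

/-- The total weight, for a weight function `h` on the points, of the points on the block `b`. -/
def blockWeight [AddCommMonoid R] (X : Finset β) (I : α → β → Prop)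
    [∀ b x, Decidable (I b x)] (h : β → R) (b : α) : R :=
  ∑ x ∈ X with I b x, h x

variable [CommRing R]
  {B A : Finset α} {X : Finset β} {I : α → β → Prop} [∀ b x, Decidable (I b x)] {r l μ z : R}

namespace IsPairBalanced

lemma sum_blockWeight (hB : IsPairBalanced B X I r l) (h : β → R) :
    ∑ b ∈ B, blockWeight X I h b = r * ∑ x ∈ X, h x := by
  simp only [blockWeight, sum_filter]
  rw [sum_comm, mul_sum]
  refine sum_congr rfl fun x hx => ?_
  rw [← sum_filter, sum_const, nsmul_eq_mul, hB.card_point x hx]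

lemma card_pair_eq_ite [DecidableEq β] (hB : IsPairBalanced B X I r l) {x y : β} (hx : x ∈ X)
    (hy : y ∈ X) : (#{b ∈ B | I b x ∧ I b y} : R) = l + if x = y then r - l else 0 := by
  split_ifs with hxy
  · simp only [hxy, and_self, hB.card_point y hy, add_sub_cancel]
  · rw [hB.card_pair x hx y hy hxy, add_zero]

lemma sum_blockWeight_sq (hB : IsPairBalanced B X I r l) (h : β → R) :
    ∑ b ∈ B, blockWeight X I h b ^ 2 =
      l * (∑ x ∈ X, h x) ^ 2 + (r - l) * ∑ x ∈ X, h x ^ 2 := by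
  classical
  calc ∑ b ∈ B, blockWeight X I h b ^ 2
      = ∑ b ∈ B, ∑ x ∈ X, ∑ y ∈ X, if I b x ∧ I b y then h x * h y else 0 := by
        simp only [blockWeight, sum_filter, sq, sum_mul_sum, ite_zero_mul_ite_zero]
    _ = ∑ x ∈ X, ∑ y ∈ X, #{b ∈ B | I b x ∧ I b y} * (h x * h y) := by
        rw [sum_comm]
        refine sum_congr rfl fun x _ => sum_comm.trans (sum_congr rfl fun y _ => ?_)
        rw [← sum_filter, sum_const, nsmul_eq_mul]
    _ = ∑ x ∈ X, ∑ y ∈ X, (l * (h x * h y) + if x = y then (r - l) * (h x * h y) else 0) := by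
        refine sum_congr rfl fun x hx => sum_congr rfl fun y hy => ?_
        rw [hB.card_pair_eq_ite hx hy, add_mul, ite_mul, zero_mul]
    _ = l * (∑ x ∈ X, h x) ^ 2 + (r - l) * ∑ x ∈ X, h x ^ 2 := by
        simp only [sum_add_distrib, sum_ite_eq, ← mul_sum, sq, sum_mul_sum]
        rw [sum_congr rfl fun x hx => if_pos hx, ← mul_sum (f := fun x => h x * h x)]

variable [LinearOrder R] [IsStrictOrderedRing R]

lemma sum_sq_blockWeight_sub_le (hB : IsPairBalanced B X I r l) (hB₀ : B.Nonempty)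
    (hl : l * #B ≤ r ^ 2) (h : β → R) (hμ : μ * #B = r * ∑ x ∈ X, h x) :
    ∑ b ∈ B, (blockWeight X I h b - μ) ^ 2 ≤ (r - l) * ∑ x ∈ X, h x ^ 2 := by
  have hB_pos : (0 : R) < #B := by exact_mod_cast hB₀.card_pos
  have hmean : l * (∑ x ∈ X, h x) ^ 2 ≤ μ ^ 2 * #B := by
    refine le_of_mul_le_mul_right ?_ hB_pos
    calc l * (∑ x ∈ X, h x) ^ 2 * #B = l * #B * (∑ x ∈ X, h x) ^ 2 := by ring
      _ ≤ r ^ 2 * (∑ x ∈ X, h x) ^ 2 := by gcongr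
      _ = μ ^ 2 * #B * #B := by rw [← mul_pow, ← hμ]; ring
  calc ∑ b ∈ B, (blockWeight X I h b - μ) ^ 2
      = ∑ b ∈ B, blockWeight X I h b ^ 2 - 2 * μ * ∑ b ∈ B, blockWeight X I h b + μ ^ 2 * #B := by
        simp only [sub_sq', sum_sub_distrib, sum_add_distrib, sum_const, mul_sum, nsmul_eq_mul]
        ring_nf
    _ = (r - l) * ∑ x ∈ X, h x ^ 2 + (l * (∑ x ∈ X, h x) ^ 2 - μ ^ 2 * #B) := by
        rw [hB.sum_blockWeight_sq, hB.sum_blockWeight, ← hμ]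
        ring
    _ ≤ (r - l) * ∑ x ∈ X, h x ^ 2 := by linarith

lemma card_mul_sq_le (hB : IsPairBalanced B X I r l) (hB₀ : B.Nonempty)
    (hl : l * #B ≤ r ^ 2) (h : β → R) (hμ : μ * #B = r * ∑ x ∈ X, h x) (hμz : μ ≤ z) (hAB : A ⊆ B)
    (hz : ∀ b ∈ A, z ≤ blockWeight X I h b) :
    #A * (z - μ) ^ 2 ≤ (r - l) * ∑ x ∈ X, h x ^ 2 := by
  calc #A * (z - μ) ^ 2 ≤ ∑ b ∈ A, (blockWeight X I h b - μ) ^ 2 := by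
        rw [← nsmul_eq_mul]
        refine card_nsmul_le_sum _ _ _ fun b hb => ?_
        refine pow_le_pow_left₀ ?_ ?_ 2
        · exact sub_nonneg.mpr hμz
        · linarith [hz b hb]
    _ ≤ ∑ b ∈ B, (blockWeight X I h b - μ) ^ 2 :=
        sum_le_sum_of_subset_of_nonneg hAB fun _ _ _ => sq_nonneg _
    _ ≤ _ := hB.sum_sq_blockWeight_sub_le hB₀ hl h hμ

-- The mean block weight is `c * z`, so blocks of `A` deviate from it by at least `(1 - c) * z`.
lemma card_mul_one_sub_sq_mul_le {h : β → R} {a c w : R} (hB : IsPairBalanced B X I r l)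
    (hA₀ : A.Nonempty) (hAB : A ⊆ B) (hl₀ : 0 ≤ l) (hl : l * #B ≤ r ^ 2) (hh₀ : ∀ x ∈ X, 0 ≤ h x)
    (hha : ∀ x ∈ X, h x ≤ a) (hsum : ∑ x ∈ X, h x = z * w) (hc : c * #B = r * w) (hc₁ : c ≤ 1)
    (hz₀ : 0 < z) (hz : ∀ b ∈ A, z ≤ blockWeight X I h b) :
    #A * (1 - c) ^ 2 * z ≤ a * r * w := by
  have hμ : z * c * #B = r * ∑ x ∈ X, h x := by
    rw [hsum]
    linear_combination z * hc
  have hsq : (r - l) * ∑ x ∈ X, h x ^ 2 ≤ r * a * ∑ x ∈ X, h x := by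
    simp only [mul_sum]
    refine sum_le_sum fun x hx => ?_
    have hr : 0 ≤ r := hB.card_point x hx ▸ Nat.cast_nonneg _
    calc (r - l) * h x ^ 2 ≤ r * h x ^ 2 := by gcongr; exact sub_le_self r hl₀
      _ = r * h x * h x := by ring
      _ ≤ r * a * h x := by gcongr; exacts [hh₀ x hx, hha x hx]
  refine le_of_mul_le_mul_right ?_ hz₀
  calc #A * (1 - c) ^ 2 * z * z = #A * (z - z * c) ^ 2 := by ring
    _ ≤ (r - l) * ∑ x ∈ X, h x ^ 2 :=
      hB.card_mul_sq_le (hA₀.mono hAB) hl h hμ (mul_le_of_le_one_right hz₀.le hc₁) hAB hz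
    _ ≤ r * a * ∑ x ∈ X, h x := hsq
    _ = a * r * w * z := by rw [hsum]; ring

end IsPairBalanced

end PairBalanced

section Subspaces

variable {F V : Type*} [Field F] [AddCommGroup V] [Module F V]
  {P S T W : Submodule F V} {k : ℕ}

lemma finrank_sup_of_disjoint [FiniteDimensional F V] (h : Disjoint S T) :
    finrank F ↥(S ⊔ T) = finrank F S + finrank F T := by
  rw [← finrank_sup_add_finrank_inf_eq, h.eq_bot, finrank_bot, add_zero]

lemma disjoint_of_finrank_eq_one (hP : finrank F P = 1) (h : ¬ P ≤ S) : Disjoint P S :=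
  (isAtom_iff_finrank_eq_one.mpr hP).not_le_iff_disjoint.mp h

lemma finrank_inf_add_one [FiniteDimensional F V] {H H' : Submodule F V}
    (hH : finrank F H + 1 = finrank F V) (hH' : finrank F H' + 1 = finrank F V)
    (hne : H ≠ H') :
    finrank F ↥(H ⊓ H') + 1 = finrank F H := by
  have hsup : finrank F H < finrank F ↥(H ⊔ H') :=
    finrank_lt_finrank_of_lt (left_lt_sup.mpr fun h =>
      hne (eq_of_le_of_finrank_le h (by omega)).symm)
  have := finrank_sup_add_finrank_inf_eq H H'
  have := finrank_le (H ⊔ H')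
  omega

lemma not_codisjoint_of_not_disjoint [FiniteDimensional F V]
    (hST : finrank F S + finrank F T = finrank F V) (h : ¬ Disjoint S T) : ¬ Codisjoint S T := by
  intro hco
  have hsum := finrank_sup_add_finrank_inf_eq S T
  rw [hco.eq_top, finrank_top, hST, Nat.add_eq_left, finrank_eq_zero] at hsum
  exact h (disjoint_iff.mpr hsum)

section Counting

variable [Finite V]

/-- The `k`-dimensional subspaces `R` with `T ≤ R ≤ W`; here `k` is the dimension of `R` itself, not
of `R / T`. Points, hyperplanes and the `k`-spaces through a point are all of this form. -/
noncomputable def subspacesBetween (T W : Submodule F V) (k : ℕ) : Finset (Submodule F V) :=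
  (Set.toFinite {R | T ≤ R ∧ R ≤ W ∧ finrank F R = k}).toFinset

@[simp]
lemma mem_subspacesBetween {R : Submodule F V} :
    R ∈ subspacesBetween T W k ↔ T ≤ R ∧ R ≤ W ∧ finrank F R = k :=
  Set.Finite.mem_toFinset _

lemma subspacesBetween_finrank_self (h : T ≤ W) : subspacesBetween T W (finrank F T) = {T} := by
  ext R
  rw [mem_subspacesBetween, mem_singleton]
  refine ⟨fun ⟨hTR, _, hR⟩ => (eq_of_le_of_finrank_eq hTR hR.symm).symm, ?_⟩
  rintro rfl
  exact ⟨le_rfl, h, rfl⟩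

open scoped Classical in
lemma filter_le_subspacesBetween {L : Submodule F V} (h : T ≤ L) :
    {R ∈ subspacesBetween T W k | L ≤ R} = subspacesBetween L W k := by
  ext R
  simp only [mem_filter, mem_subspacesBetween]
  exact ⟨fun hR => ⟨hR.2, hR.1.2⟩, fun hR => ⟨⟨h.trans hR.1, hR.2⟩, hR.1⟩⟩

open scoped Classical in
lemma filter_ge_subspacesBetween {U : Submodule F V} (h : U ≤ W) :
    {R ∈ subspacesBetween T W k | R ≤ U} = subspacesBetween T U k := by
  ext R
  simp only [mem_filter, mem_subspacesBetween]
  exact ⟨fun hR => ⟨hR.1.1, hR.2, hR.1.2.2⟩,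
    fun hR => ⟨⟨hR.1, hR.2.1.trans h, hR.2.2⟩, hR.2.1⟩⟩

lemma ncard_sdiff_of_le (h : T ≤ W) : ((W \ T : Set V).ncard : ℚ) =
    (Nat.card F : ℚ) ^ finrank F W - (Nat.card F : ℚ) ^ finrank F T := by
  have hncard (U : Submodule F V) : (U : Set V).ncard = Nat.card F ^ finrank F U :=
    natCard_eq_pow_finrank
  have := Set.ncard_sdiff_add_ncard_of_subset (SetLike.coe_subset_coe.mpr h)
  rw [hncard, hncard] at this
  exact eq_sub_of_add_eq (by exact_mod_cast this)

open scoped Classical in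
lemma ncard_sdiff_eq_sum (h : T ≤ W) : (W \ T : Set V).ncard =
    ∑ L ∈ subspacesBetween T W (finrank F T + 1), (L \ T : Set V).ncard := by
  have hfin (U : Submodule F V) := Set.toFinite (U \ T : Set V)
  have hmaps : Set.MapsTo (fun v => T ⊔ F ∙ v) (hfin W).toFinset
      (subspacesBetween T W (finrank F T + 1)) := by
    intro v hv
    obtain ⟨hvW, hvT⟩ := (hfin W).mem_toFinset.mp hv
    exact mem_subspacesBetween.mpr
      ⟨le_sup_left, sup_le h ((span_singleton_le_iff_mem v W).mpr hvW),
        finrank_sup_span_singleton hvT⟩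
  rw [Set.ncard_eq_toFinset_card _ (hfin W), card_eq_sum_card_fiberwise hmaps]
  refine sum_congr rfl fun L hL => ?_
  obtain ⟨hTL, hLW, hLrank⟩ := mem_subspacesBetween.mp hL
  rw [Set.ncard_eq_toFinset_card _ (hfin L)]
  congr 1
  ext v
  simp only [mem_filter, Set.Finite.mem_toFinset, Set.mem_sdiff, SetLike.mem_coe]
  constructor
  · rintro ⟨⟨-, hvT⟩, rfl⟩
    exact ⟨mem_sup_right (mem_span_singleton_self v), hvT⟩
  · rintro ⟨hvL, hvT⟩
    exact ⟨⟨hLW hvL, hvT⟩, eq_of_le_of_finrank_eq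
      (sup_le hTL ((span_singleton_le_iff_mem v L).mpr hvL))
      ((finrank_sup_span_singleton hvT).trans hLrank.symm)⟩

variable [Finite F]

lemma card_subspacesBetween_finrank_add_one (h : T ≤ W) :
    (#(subspacesBetween T W (finrank F T + 1)) : ℚ) =
      qNum (Nat.card F) (finrank F W - finrank F T) := by
  have hq : (1 : ℚ) < Nat.card F := by exact_mod_cast Finite.one_lt_card
  have hsum : ((W \ T : Set V).ncard : ℚ) = _ := congrArg Nat.cast (ncard_sdiff_eq_sum h)
  rw [Nat.cast_sum, ncard_sdiff_of_le h, sum_congr rfl fun L hL =>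
    (mem_subspacesBetween.mp hL).2.2 ▸ ncard_sdiff_of_le (mem_subspacesBetween.mp hL).1,
    sum_const, nsmul_eq_mul] at hsum
  obtain ⟨m, hm⟩ := Nat.exists_eq_add_of_le (finrank_mono h)
  rw [hm, pow_add, pow_succ] at hsum
  rw [hm, Nat.add_sub_cancel_left]
  refine mul_right_cancel₀ (sub_pos.mpr hq).ne' ?_
  refine mul_left_cancel₀ (pow_pos (zero_lt_one.trans hq) (finrank F T)).ne' ?_
  rw [qNum_mul_sub_one]
  linear_combination -hsum

theorem card_subspacesBetween (h : T ≤ W) (hk : finrank F T ≤ k) :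
    (#(subspacesBetween T W k) : ℚ) =
      gaussBinom (Nat.card F) (finrank F W - finrank F T) (k - finrank F T) := by
  classical
  obtain ⟨j, rfl⟩ := Nat.exists_eq_add_of_le hk
  rw [Nat.add_sub_cancel_left]
  clear hk
  induction j generalizing T with
  | zero => rw [add_zero, subspacesBetween_finrank_self h, card_singleton, Nat.cast_one,
      gaussBinom_zero_right]
  | succ j ih =>
    set points := subspacesBetween T W (finrank F T + 1)
    set spaces := subspacesBetween T W (finrank F T + (j + 1))
    have habove {L} (hL : L ∈ points) : (#(spaces.bipartiteAbove (· ≤ ·) L) : ℚ) =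
        gaussBinom (Nat.card F) (finrank F W - finrank F T - 1) j := by
      obtain ⟨hTL, hLW, hLrank⟩ := mem_subspacesBetween.mp hL
      rw [Nat.sub_sub, ← hLrank, ← ih hLW, hLrank, add_assoc, add_comm 1]
      exact congrArg (fun s => (#s : ℚ)) (filter_le_subspacesBetween hTL)
    have hbelow {R} (hR : R ∈ spaces) : (#(points.bipartiteBelow (· ≤ ·) R) : ℚ) =
        qNum (Nat.card F) (j + 1) := by
      obtain ⟨hTR, hRW, hRrank⟩ := mem_subspacesBetween.mp hR
      rw [show j + 1 = finrank F R - finrank F T by omega,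
        ← card_subspacesBetween_finrank_add_one hTR]
      exact congrArg (fun s => (#s : ℚ)) (filter_ge_subspacesBetween hRW)
    have hcount := le_antisymm
      (card_nsmul_le_card_nsmul _ (fun L hL => (habove hL).ge) fun R hR => (hbelow hR).le)
      (card_nsmul_le_card_nsmul' _ (fun R hR => (hbelow hR).ge) fun L hL => (habove hL).le)
    rw [nsmul_eq_mul, nsmul_eq_mul, card_subspacesBetween_finrank_add_one h,
      ← gaussBinom_succ_mul_qNum_pred Finite.one_lt_card] at hcount
    exact (mul_right_cancel₀ (qNum_pos j.succ_pos).ne' hcount).symm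

lemma card_points (W : Submodule F V) :
    (#(subspacesBetween ⊥ W 1) : ℚ) = qNum (Nat.card F) (finrank F W) := by
  simpa only [finrank_bot, zero_add, Nat.sub_zero] using
    card_subspacesBetween_finrank_add_one (bot_le : ⊥ ≤ W)

lemma card_hyperplanes {n m : ℕ} (hV : finrank F V = n + 1) (hT : finrank F T + m = n) :
    (#(subspacesBetween T ⊤ n) : ℚ) = qNum (Nat.card F) (m + 1) := by
  rw [card_subspacesBetween le_top (by omega), finrank_top,
    show finrank F V - finrank F T = m + 1 by omega, show n - finrank F T = m by omega,
    gaussBinom_succ_self Finite.one_lt_card]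

end Counting

end Subspaces

section Degree

variable {F V : Type*} [Field F] [Finite F] [AddCommGroup V] [Module F V] [Finite V]
  {P T U₁ U₂ W : Submodule F V} {A : Finset (Submodule F V)} {k : ℕ}

open scoped Classical in
lemma card_le_qNum_mul_of_not_disjoint {x : ℚ} (hAW : ∀ R ∈ A, ¬ Disjoint R W)
    (hx : ∀ Q ≤ W, finrank F Q = 1 → #{R ∈ A | Q ≤ R} ≤ x) :
    #A ≤ qNum (Nat.card F) (finrank F W) * x := by
  rw [← card_points, ← nsmul_eq_mul, ← mul_one (#A : ℚ), ← nsmul_eq_mul]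
  refine card_nsmul_le_card_nsmul (fun R Q => Q ≤ R) (fun R hR => ?_) fun Q hQ => ?_
  · obtain ⟨v, hv, hv₀⟩ := exists_mem_ne_zero_of_ne_bot (disjoint_iff.not.mp (hAW R hR))
    have hspan : F ∙ v ≤ R ⊓ W := (span_singleton_le_iff_mem v _).mpr hv
    refine Nat.one_le_cast.mpr (card_pos.mpr ⟨F ∙ v, mem_filter.mpr ⟨?_, hspan.trans inf_le_left⟩⟩)
    exact mem_subspacesBetween.mpr
      ⟨bot_le, hspan.trans inf_le_right, finrank_span_singleton hv₀⟩
  · obtain ⟨-, hQW, hQ₁⟩ := mem_subspacesBetween.mp hQ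
    exact hx Q hQW hQ₁

lemma card_le_of_disjoint (hA : A ⊆ subspacesBetween T ⊤ k) (hTk : finrank F T < k)
    (hTW : Disjoint T W) (hAW : ∀ R ∈ A, ¬ Disjoint R W) :
    #A ≤ qNum (Nat.card F) (finrank F W) *
      gaussBinom (Nat.card F) (finrank F V - (finrank F T + 1)) (k - (finrank F T + 1)) := by
  classical
  refine card_le_qNum_mul_of_not_disjoint hAW fun Q hQW hQ => ?_
  have hrank : finrank F ↥(T ⊔ Q) = finrank F T + 1 :=
    hQ ▸ finrank_sup_of_disjoint (hTW.mono_right hQW)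
  rw [← hrank, ← finrank_top F V, ← card_subspacesBetween le_top (hrank.trans_le hTk)]
  refine Nat.cast_le.mpr (card_le_card fun R hR => ?_)
  obtain ⟨hRA, hQR⟩ := mem_filter.mp hR
  obtain ⟨hTR, hR⟩ := mem_subspacesBetween.mp (hA hRA)
  exact mem_subspacesBetween.mpr ⟨sup_le hTR hQR, hR⟩

open scoped Classical in
lemma card_filter_le_of_not_le_sup {Q U : Submodule F V} (hP : finrank F P = 1)
    (hQ : finrank F Q = 1) (hk : 3 ≤ k) (hA : A ⊆ subspacesBetween P ⊤ k) (hPU : ¬ P ≤ U)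
    (hQU : ¬ Q ≤ P ⊔ U) (hAU : ∀ R ∈ A, ¬ Disjoint R U) :
    #{R ∈ A | Q ≤ R} ≤ qNum (Nat.card F) (finrank F U) *
      gaussBinom (Nat.card F) (finrank F V - 3) (k - 3) := by
  have hQ_disj := disjoint_of_finrank_eq_one hQ hQU
  have hPQ : finrank F ↥(Q ⊔ P) = 2 := by
    rw [finrank_sup_of_disjoint (hQ_disj.mono_right le_sup_left), hQ, hP]
  have hPQU : Disjoint (Q ⊔ P) U :=
    (disjoint_of_finrank_eq_one hP hPU).disjoint_sup_left_of_disjoint_sup_right hQ_disj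
  have hsub : {R ∈ A | Q ≤ R} ⊆ subspacesBetween (Q ⊔ P) ⊤ k := fun R hR => by
    obtain ⟨hRA, hQR⟩ := mem_filter.mp hR
    obtain ⟨hPR, hR⟩ := mem_subspacesBetween.mp (hA hRA)
    exact mem_subspacesBetween.mpr ⟨sup_le hQR hPR, hR⟩
  simpa only [hPQ] using
    card_le_of_disjoint hsub (by omega) hPQU fun R hR => hAU R (mem_filter.mp hR).1

lemma card_le_add_of_not_le (hP : finrank F P = 1) (hk : 3 ≤ k) (hA : A ⊆ subspacesBetween P ⊤ k)
    (hPU₁ : ¬ P ≤ U₁) (hPU₂ : ¬ P ≤ U₂) (hAU₁ : ∀ R ∈ A, ¬ Disjoint R U₁)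
    (hAU₂ : ∀ R ∈ A, ¬ Disjoint R U₂) :
    #A ≤ qNum (Nat.card F) (finrank F ↥(U₁ ⊓ (P ⊔ U₂))) *
        gaussBinom (Nat.card F) (finrank F V - 2) (k - 2) +
      qNum (Nat.card F) (finrank F U₁) * (qNum (Nat.card F) (finrank F U₂) *
        gaussBinom (Nat.card F) (finrank F V - 3) (k - 3)) := by
  classical
  rw [← card_filter_add_card_filter_not (fun R => ¬ Disjoint R (U₁ ⊓ (P ⊔ U₂))), Nat.cast_add]
  simp only [not_not]
  refine add_le_add ?_ (card_le_qNum_mul_of_not_disjoint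
    (fun R hR => hAU₁ R (mem_filter.mp hR).1) fun Q hQU₁ hQ => ?_)
  · have hdisj := (disjoint_of_finrank_eq_one hP hPU₁).mono_right
      (inf_le_left : U₁ ⊓ (P ⊔ U₂) ≤ U₁)
    simpa only [hP] using card_le_of_disjoint ((filter_subset _ _).trans hA) (by omega) hdisj
      fun R hR => (mem_filter.mp hR).2
  by_cases hQU₂ : Q ≤ P ⊔ U₂
  · rw [filter_false_of_mem fun R hR hQR => ?_, card_empty, Nat.cast_zero]
    · exact mul_nonneg (qNum_nonneg _) (gaussBinom_nonneg Finite.one_lt_card _ _)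
    · have hQ_bot := le_bot_iff.mp ((mem_filter.mp hR).2 hQR (le_inf hQU₁ hQU₂))
      rw [hQ_bot, finrank_bot] at hQ
      exact zero_ne_one hQ
  · exact card_filter_le_of_not_le_sup hP hQ hk ((filter_subset _ _).trans hA) hPU₂ hQU₂
      fun R hR => hAU₂ R (mem_filter.mp hR).1

end Degree

section Variance

variable {F V : Type*} [Field F] [Finite F] [AddCommGroup V] [Module F V] [Finite V]
  {P T : Submodule F V} {A Z : Finset (Submodule F V)} {j m n : ℕ}

open scoped Classical in
lemma isPairBalanced_subspacesBetween (hV : finrank F V = finrank F T + n + 2) :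
    IsPairBalanced (subspacesBetween T ⊤ (finrank F T + j))
      (subspacesBetween T ⊤ (finrank F T + n + 1)) (· ≤ ·)
      (gaussBinom (Nat.card F) (n + 1) j) (gaussBinom (Nat.card F) n j) where
  card_point H hH := by
    obtain ⟨hTH, -, hH⟩ := mem_subspacesBetween.mp hH
    rw [filter_ge_subspacesBetween le_top, card_subspacesBetween hTH (Nat.le_add_right _ _), hH,
      add_assoc, Nat.add_sub_cancel_left, Nat.add_sub_cancel_left]
  card_pair H hH H' hH' hne := by
    obtain ⟨hTH, -, hH⟩ := mem_subspacesBetween.mp hH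
    obtain ⟨hTH', -, hH'⟩ := mem_subspacesBetween.mp hH'
    have hinf := finrank_inf_add_one (by omega) (by omega) hne
    simp only [← le_inf_iff]
    rw [filter_ge_subspacesBetween le_top,
      card_subspacesBetween (le_inf hTH hTH') (Nat.le_add_right _ _), Nat.add_sub_cancel_left,
      show finrank F ↥(H ⊓ H') - finrank F T = n by omega]

open scoped Classical in
lemma sum_card_filter_le_hyperplane (hP : finrank F P = 1) (hV : finrank F V = n + 1)
    (hZP : ∀ S ∈ Z, ¬ P ≤ S) (hZ : ∀ S ∈ Z, finrank F S + m + 1 = n) :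
    ∑ H ∈ subspacesBetween P ⊤ n, (#{S ∈ Z | S ≤ H} : ℚ) = #Z * qNum (Nat.card F) (m + 1) := by
  have hswap := sum_card_bipartiteAbove_eq_sum_card_bipartiteBelow (s := Z)
    (t := subspacesBetween P ⊤ n) (· ≤ ·)
  refine (by exact_mod_cast hswap.symm : _ = ∑ S ∈ Z,
    (#((subspacesBetween P ⊤ n).bipartiteAbove (· ≤ ·) S) : ℚ)).trans ?_
  rw [← nsmul_eq_mul, ← sum_const]
  refine sum_congr rfl fun S hS => ?_
  have hPS := finrank_sup_of_disjoint (disjoint_of_finrank_eq_one hP (hZP S hS))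
  have := hZ S hS
  rw [← card_hyperplanes hV (show finrank F ↥(P ⊔ S) + m = n by omega), bipartiteAbove]
  congr 2
  ext H
  simp only [mem_filter, mem_subspacesBetween, sup_le_iff]
  tauto

lemma exists_hyperplane_ge (hV : finrank F V = n + 1) (hT : T ≠ ⊤) :
    ∃ H, T ≤ H ∧ finrank F H = n := by
  have hlt := finrank_lt hT
  have hcard := card_hyperplanes hV (show finrank F T + (n - finrank F T) = n by omega)
  have hpos := hcard ▸ qNum_pos (q := Nat.card F) (n - finrank F T).succ_pos
  obtain ⟨H, hH⟩ := card_pos.mp (Nat.cast_pos.mp hpos)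
  obtain ⟨hTH, -, hH⟩ := mem_subspacesBetween.mp hH
  exact ⟨H, hTH, hH⟩

open scoped Classical in
lemma card_le_sum_card_filter_le_hyperplane {R : Submodule F V} (hV : finrank F V = n + 1)
    (hPR : P ≤ R) (hRZ : ∀ S ∈ Z, ¬ Codisjoint R S) :
    #Z ≤ ∑ H ∈ subspacesBetween P ⊤ n with R ≤ H, #{S ∈ Z | S ≤ H} := by
  refine le_trans (card_le_card fun S hS => ?_) card_biUnion_le
  obtain ⟨H, hle, hH⟩ := exists_hyperplane_ge hV (codisjoint_iff.not.mp (hRZ S hS))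
  obtain ⟨hRH, hSH⟩ := sup_le_iff.mp hle
  simp only [mem_biUnion, mem_filter, mem_subspacesBetween]
  exact ⟨H, ⟨⟨hPR.trans hRH, le_top, hH⟩, hRH⟩, hS, hSH⟩

open scoped Classical in
theorem card_mul_sq_mul_card_le {a : ℕ} {c : ℚ} (hP : finrank F P = 1) (hV : finrank F V = n + 3)
    (hA₀ : A.Nonempty) (hA : A ⊆ subspacesBetween P ⊤ (j + 1)) (hZP : ∀ S ∈ Z, ¬ P ≤ S)
    (hZ : ∀ S ∈ Z, finrank F S + m + 1 = n + 2) (hAZ : ∀ R ∈ A, ∀ S ∈ Z, ¬ Codisjoint R S)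
    (ha : ∀ H : Submodule F V, finrank F H = n + 2 → #{S ∈ Z | S ≤ H} ≤ a)
    (hc : c * qNum (Nat.card F) (n + 2) =
      qNum (Nat.card F) (n + 2 - j) * qNum (Nat.card F) (m + 1)) (hc₁ : c ≤ 1) :
    #A * (1 - c) ^ 2 * #Z ≤
      a * gaussBinom (Nat.card F) (n + 1) j * qNum (Nat.card F) (m + 1) := by
  have hq : 1 < Nat.card F := Finite.one_lt_card
  obtain rfl | hZ₀ := Z.eq_empty_or_nonempty
  · have := gaussBinom_nonneg hq (n + 1) j
    have := qNum_nonneg (q := Nat.card F) (m + 1)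
    rw [card_empty, Nat.cast_zero, mul_zero]
    positivity
  have hbal := isPairBalanced_subspacesBetween (T := P) (j := j) (n := n) (by omega)
  rw [show finrank F P + j = j + 1 by omega, show finrank F P + n + 1 = n + 2 by omega] at hbal
  have hcard : (#(subspacesBetween P ⊤ (j + 1)) : ℚ) = gaussBinom (Nat.card F) (n + 2) j := by
    rw [card_subspacesBetween le_top (by omega), finrank_top, hV, hP, Nat.add_sub_cancel]
    rfl
  refine hbal.card_mul_one_sub_sq_mul_le (h := fun H => (#{S ∈ Z | S ≤ H} : ℚ)) hA₀ hA
    (gaussBinom_nonneg hq n j) ?_ (fun _ _ => Nat.cast_nonneg _) (fun H hH => ?_)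
    (sum_card_filter_le_hyperplane hP hV hZP hZ) ?_ hc₁ (Nat.cast_pos.mpr hZ₀.card_pos)
    fun R hR => ?_
  · exact hcard ▸ gaussBinom_mul_gaussBinom_le_sq hq n j
  · exact Nat.cast_le.mpr (ha H (mem_subspacesBetween.mp hH).2.2)
  · have hpred := qNum_mul_gaussBinom_pred hq (n + 2) j
    rw [show n + 2 - 1 = n + 1 by omega] at hpred
    rw [hcard]
    refine mul_right_cancel₀ (qNum_pos (q := Nat.card F) (n + 1).succ_pos).ne' ?_
    linear_combination gaussBinom (Nat.card F) (n + 2) j * hc -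
      qNum (Nat.card F) (m + 1) * hpred
  · exact (Nat.cast_le.mpr (card_le_sum_card_filter_le_hyperplane hV
      (mem_subspacesBetween.mp (hA hR)).1 (hAZ R hR))).trans_eq (Nat.cast_sum _ _)

end Variance

section Estimates

variable {q : ℕ}

lemma three_mul_qNum_mul_qNum_le (hq : 4 ≤ q) (m n : ℕ) :
    3 * (qNum q m * qNum q n) ≤ qNum q (m + n) := by
  have hq' : (4 : ℚ) ≤ q := by exact_mod_cast hq
  refine le_trans ?_ (sub_one_mul_qNum_mul_qNum_le m n)
  exact mul_le_mul_of_nonneg_right (by linarith) (mul_nonneg (qNum_nonneg m) (qNum_nonneg n))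

lemma three_mul_qNum_mul_gaussBinom_le (hq : 4 ≤ q) (m j : ℕ) :
    3 * (qNum q m * gaussBinom q (m + j) j) ≤ gaussBinom q (m + j + 1) (j + 1) := by
  have hg := gaussBinom_nonneg (q := q) (by omega) (m + j) j
  refine le_of_mul_le_mul_right ?_ (qNum_pos j.succ_pos : 0 < qNum q (j + 1))
  calc 3 * (qNum q m * gaussBinom q (m + j) j) * qNum q (j + 1)
      = 3 * (qNum q m * qNum q (j + 1)) * gaussBinom q (m + j) j := by ring
    _ ≤ qNum q (m + (j + 1)) * gaussBinom q (m + j) j := by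
        gcongr
        exact three_mul_qNum_mul_qNum_le hq m (j + 1)
    _ = gaussBinom q (m + j + 1) (j + 1) * qNum q (j + 1) :=
        (gaussBinom_succ_mul_qNum_pred (by omega) _ _).symm

lemma four_mul_qNum_le (hq : 4 ≤ q) (n : ℕ) : 4 * qNum q n ≤ qNum q (n + 1) := by
  have hq' : (4 : ℚ) ≤ q := by exact_mod_cast hq
  rw [qNum_succ]
  linarith [mul_le_mul_of_nonneg_right hq' (qNum_nonneg (q := q) n)]

lemma qNum_succ_lt_two_mul {k : ℕ} (hq : 4 ≤ q) (hk : 3 ≤ k) :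
    qNum q (k + 1) < 2 * (qNum q k * gaussBinom q (2 * k - 2) (k - 2)) := by
  obtain ⟨j, rfl⟩ := Nat.exists_eq_add_of_le' hk
  set x := qNum q (j + 3)
  have hx : (q : ℚ) + 1 ≤ x := by
    have := qNum_mono (q := q) (show 2 ≤ j + 3 by omega)
    rwa [qNum_succ, qNum_one, mul_one] at this
  have hq' : (4 : ℚ) ≤ q := by exact_mod_cast hq
  have hx₀ : 0 ≤ x := qNum_nonneg _
  have hg : 3 * x ≤ gaussBinom q (2 * (j + 3) - 2) (j + 3 - 2) := by
    have h₁ := one_le_gaussBinom (q := q) (by omega) (show j ≤ j + 3 + j by omega)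
    have h₃ := three_mul_qNum_mul_gaussBinom_le hq (j + 3) j
    rw [show j + 3 + j + 1 = 2 * (j + 3) - 2 by omega] at h₃
    exact (mul_le_mul_of_nonneg_left (le_mul_of_one_le_right hx₀ h₁)
      zero_le_three).trans h₃
  calc qNum q (j + 3 + 1) = q * x + 1 := qNum_succ _
    _ < (q + 1) * x := by linarith
    _ ≤ x * x := by gcongr
    _ ≤ 2 * (x * (3 * x)) := by nlinarith
    _ ≤ _ := by gcongr

end Estimates

section Intersecting

variable {F V : Type*} [Field F] [Finite F] [AddCommGroup V] [Module F V] [Finite V]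
  {P U U₁ U₂ : Submodule F V} {A Y : Finset (Submodule F V)} {k : ℕ}

open scoped Classical in
lemma four_mul_card_filter_not_le_le (hF : 4 ≤ Nat.card F) (hk : 3 ≤ k) (hV : finrank F V = 2 * k)
    (hdim : ∀ R ∈ Y, finrank F R = k) (hint : ∀ R ∈ Y, ∀ S ∈ Y, ¬ Disjoint R S)
    (hP : finrank F P = 1) (hPY : {S ∈ Y | P ≤ S}.Nonempty)
    (hmax : ∀ H : Submodule F V, finrank F H + 1 = 2 * k → #{S ∈ Y | S ≤ H} ≤ #{S ∈ Y | P ≤ S}) :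
    (4 * #{S ∈ Y | ¬ P ≤ S} : ℚ) ≤ 9 * (qNum (Nat.card F) k *
      gaussBinom (Nat.card F) (2 * k - 2) (k - 2)) := by
  obtain ⟨i, rfl⟩ := Nat.exists_eq_add_of_le' hk
  set q := Nat.card F
  set c : ℚ := qNum q (i + 3) * qNum q (i + 2) / qNum q (2 * i + 5)
  have hden : 0 < qNum q (2 * i + 5) := qNum_pos (by omega)
  have hc : c ≤ 1 / 3 := by
    have := three_mul_qNum_mul_qNum_le hF (i + 3) (i + 2)
    rw [show i + 3 + (i + 2) = 2 * i + 5 by omega] at this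
    rw [div_le_iff₀ hden]
    linarith
  have hvar := card_mul_sq_mul_card_le (A := {S ∈ Y | P ≤ S}) (Z := {S ∈ Y | ¬ P ≤ S})
    (n := 2 * i + 3) (j := i + 2) (m := i + 1) (c := c) (a := #{S ∈ Y | P ≤ S}) hP (by omega) hPY
    (fun R hR => ?_) (fun S hS => (mem_filter.mp hS).2) (fun S hS => ?_) (fun R hR S hS => ?_)
    (fun H hH => ?_) ?_ (by linarith)
  · have hgauss := gaussBinom_succ_mul_qNum (q := q) (by omega) (2 * i + 4) (i + 1)
    rw [show 2 * i + 4 - (i + 1) = i + 3 by omega] at hgauss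
    replace hvar : (1 - c) ^ 2 * #{S ∈ Y | ¬ P ≤ S} ≤
        gaussBinom q (2 * i + 4) (i + 2) * qNum q (i + 2) := by
      refine le_of_mul_le_mul_left ?_ (Nat.cast_pos.mpr hPY.card_pos : (0 : ℚ) < _)
      rwa [← mul_assoc, ← mul_assoc]
    have hsq : (2 / 3 : ℚ) ^ 2 ≤ (1 - c) ^ 2 := by gcongr; linarith
    have := mul_le_mul_of_nonneg_right hsq (Nat.cast_nonneg #{S ∈ Y | ¬ P ≤ S})
    rw [show 2 * (i + 3) - 2 = 2 * i + 4 by omega, show i + 3 - 2 = i + 1 by omega]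
    linarith
  · obtain ⟨hRY, hPR⟩ := mem_filter.mp hR
    exact mem_subspacesBetween.mpr ⟨hPR, le_top, hdim R hRY⟩
  · have := hdim S (mem_filter.mp hS).1
    omega
  · have hRY := (mem_filter.mp hR).1
    have hSY := (mem_filter.mp hS).1
    refine not_codisjoint_of_not_disjoint ?_ (hint R hRY S hSY)
    rw [hdim R hRY, hdim S hSY, hV, two_mul]
  · exact (card_le_card (filter_subset_filter _ (filter_subset _ _))).trans (hmax H (by omega))
  · rw [show 2 * i + 3 + 2 - (i + 2) = i + 3 by omega]
    exact div_mul_cancel₀ _ hden.ne'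

lemma twelve_mul_card_le (hF : 4 ≤ Nat.card F) (hk : 3 ≤ k) (hV : finrank F V = 2 * k)
    (hP : finrank F P = 1) (hA : A ⊆ subspacesBetween P ⊤ k) (hU₁ : finrank F U₁ = k)
    (hU₂ : finrank F U₂ = k) (hPU₁ : ¬ P ≤ U₁) (hPU₂ : ¬ P ≤ U₂) (hU : ¬ U₁ ≤ P ⊔ U₂)
    (hAU₁ : ∀ R ∈ A, ¬ Disjoint R U₁) (hAU₂ : ∀ R ∈ A, ¬ Disjoint R U₂) :
    (12 * #A : ℚ) ≤ 7 * (qNum (Nat.card F) k *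
      gaussBinom (Nat.card F) (2 * k - 2) (k - 2)) := by
  set q := Nat.card F
  have hg := gaussBinom_nonneg (q := q) (by omega) (2 * k - 2) (k - 2)
  have hinf : 4 * qNum q (finrank F ↥(U₁ ⊓ (P ⊔ U₂))) ≤ qNum q k := by
    have hlt := finrank_lt_finrank_of_lt (inf_lt_left.mpr hU)
    exact (four_mul_qNum_le hF _).trans (qNum_mono (by omega))
  have htriple : 3 * (qNum q k * gaussBinom q (2 * k - 3) (k - 3)) ≤
      gaussBinom q (2 * k - 2) (k - 2) := by
    have := three_mul_qNum_mul_gaussBinom_le hF k (k - 3)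
    rwa [show k + (k - 3) = 2 * k - 3 by omega, show 2 * k - 3 + 1 = 2 * k - 2 by omega,
      show k - 3 + 1 = k - 2 by omega] at this
  have hcard := card_le_add_of_not_le hP hk hA hPU₁ hPU₂ hAU₁ hAU₂
  rw [hU₁, hU₂, hV] at hcard
  linarith [mul_le_mul_of_nonneg_right hinf hg,
    mul_le_mul_of_nonneg_left htriple (qNum_nonneg (q := q) k)]

lemma card_lt_two_mul_of_forall_le (hF : 4 ≤ Nat.card F) (hk : 3 ≤ k) {W : Submodule F V}
    (hW : finrank F W = k + 1) (hdim : ∀ S ∈ A, finrank F S = k) (hA : ∀ S ∈ A, S ≤ W) :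
    (#A : ℚ) < 2 * (qNum (Nat.card F) k * gaussBinom (Nat.card F) (2 * k - 2) (k - 2)) := by
  refine lt_of_le_of_lt ?_ (qNum_succ_lt_two_mul hF hk)
  have hcard := card_subspacesBetween (bot_le : ⊥ ≤ W) (k := k) (by simp)
  rw [finrank_bot, hW, Nat.sub_zero, Nat.sub_zero, gaussBinom_succ_self (by omega)] at hcard
  rw [← hcard, Nat.cast_le]
  exact card_le_card fun S hS => mem_subspacesBetween.mpr ⟨bot_le, hA S hS, hdim S hS⟩

open scoped Classical in
theorem card_lt_of_dominant_point (hF : 4 ≤ Nat.card F) (hk : 3 ≤ k)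
    (hV : finrank F V = 2 * k) (hdim : ∀ R ∈ Y, finrank F R = k)
    (hint : ∀ R ∈ Y, ∀ S ∈ Y, ¬ Disjoint R S) (hP : finrank F P = 1) (hPY : ∃ U ∈ Y, ¬ P ≤ U)
    (hmax : ∀ H : Submodule F V, finrank F H + 1 = 2 * k → #{S ∈ Y | S ≤ H} ≤ #{S ∈ Y | P ≤ S}) :
    (#Y : ℚ) < 3 * (qNum (Nat.card F) k * gaussBinom (Nat.card F) (2 * k - 2) (k - 2)) := by
  set D := qNum (Nat.card F) k * gaussBinom (Nat.card F) (2 * k - 2) (k - 2)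
  obtain ⟨U, hUY, hPU⟩ := hPY
  have hAU {S} (hS : S ∈ Y) : ∀ R ∈ {R ∈ Y | P ≤ R}, ¬ Disjoint R S :=
    fun R hR => hint R (mem_filter.mp hR).1 S hS
  have hA : {R ∈ Y | P ≤ R} ⊆ subspacesBetween P ⊤ k := fun R hR => by
    obtain ⟨hRY, hPR⟩ := mem_filter.mp hR
    exact mem_subspacesBetween.mpr ⟨hPR, le_top, hdim R hRY⟩
  have hA₀ : {R ∈ Y | P ≤ R}.Nonempty := by
    have hU_ne : U ≠ ⊤ := fun h => by
      have := hdim U hUY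
      rw [h, finrank_top] at this
      omega
    obtain ⟨H, hUH, hH⟩ := exists_hyperplane_ge (n := 2 * k - 1) (by omega) hU_ne
    exact card_pos.mp ((card_pos.mpr ⟨U, mem_filter.mpr ⟨hUY, hUH⟩⟩).trans_le (hmax H (by omega)))
  have hD : 0 < D := mul_pos (qNum_pos (by omega))
    (zero_lt_one.trans_le (one_le_gaussBinom (by omega) (by omega)))
  rw [← card_filter_add_card_filter_not (P ≤ ·), Nat.cast_add]
  by_cases hcommon : ∀ S ∈ Y, ¬ P ≤ S → S ≤ P ⊔ U
  · have hPU_disj := disjoint_of_finrank_eq_one hP hPU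
    have hle := card_le_of_disjoint hA (by omega) hPU_disj (hAU hUY)
    rw [hP, hdim U hUY, hV] at hle
    have hlt := card_lt_two_mul_of_forall_le (A := {S ∈ Y | ¬ P ≤ S}) (W := P ⊔ U) hF hk
      (by rw [finrank_sup_of_disjoint hPU_disj, hP, hdim U hUY, add_comm])
      (fun S hS => hdim S (mem_filter.mp hS).1)
      fun S hS => hcommon S (mem_filter.mp hS).1 (mem_filter.mp hS).2
    linarith
  · push Not at hcommon
    obtain ⟨S, hSY, hPS, hSU⟩ := hcommon
    have hA_le := twelve_mul_card_le hF hk hV hP hA (hdim S hSY) (hdim U hUY) hPS hPU hSU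
      (hAU hSY) (hAU hUY)
    have hZ_le := four_mul_card_filter_not_le_le hF hk hV hdim hint hP hA₀ hmax
    linarith

end Intersecting

section Duality

variable {F V : Type*} [Field F] [AddCommGroup V] [Module F V]
  {H P R S : Submodule F V} {Y : Finset (Submodule F V)} {k : ℕ}

lemma finrank_dualAnnihilator_eq [FiniteDimensional F V] {m n : ℕ} (hV : finrank F V = m + n)
    (hS : finrank F S = m) : finrank F S.dualAnnihilator = n := by
  have := Subspace.finrank_add_finrank_dualAnnihilator_eq S
  omega

lemma disjoint_dualAnnihilator_iff :
    Disjoint R.dualAnnihilator S.dualAnnihilator ↔ Codisjoint R S := by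
  rw [disjoint_iff, codisjoint_iff, ← dualAnnihilator_sup_eq, ← dualAnnihilator_top,
    Subspace.dualAnnihilator_inj]

open scoped Classical in
lemma card_filter_image_dualAnnihilator (p : Submodule F (Dual F V) → Prop) :
    #{S ∈ Y.image dualAnnihilator | p S} = #{S ∈ Y | p S.dualAnnihilator} := by
  rw [filter_image, card_image_of_injective _ fun _ _ => Subspace.dualAnnihilator_inj.mp]

open scoped Classical in
theorem card_lt_of_dominant_hyperplane [Finite F] [Finite V] (hF : 4 ≤ Nat.card F) (hk : 3 ≤ k)
    (hV : finrank F V = 2 * k) (hdim : ∀ R ∈ Y, finrank F R = k)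
    (hint : ∀ R ∈ Y, ∀ S ∈ Y, ¬ Disjoint R S) (hH : finrank F H + 1 = 2 * k)
    (hHY : ∃ U ∈ Y, ¬ U ≤ H)
    (hmax : ∀ P : Submodule F V, finrank F P = 1 → #{S ∈ Y | P ≤ S} ≤ #{S ∈ Y | S ≤ H}) :
    (#Y : ℚ) < 3 * (qNum (Nat.card F) k * gaussBinom (Nat.card F) (2 * k - 2) (k - 2)) := by
  have : Finite (Dual F V) := Module.finite_of_finite F
  rw [← card_image_of_injective Y fun _ _ => Subspace.dualAnnihilator_inj.mp]
  refine card_lt_of_dominant_point hF hk (P := H.dualAnnihilator)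
    (Subspace.dual_finrank_eq.trans hV) ?_ ?_ (finrank_dualAnnihilator_eq (by omega) rfl) ?_
    fun K hK => ?_
  · simp only [forall_mem_image]
    exact fun R hR => finrank_dualAnnihilator_eq (by omega) (hdim R hR)
  · simp only [forall_mem_image, disjoint_dualAnnihilator_iff]
    intro R hR S hS
    refine not_codisjoint_of_not_disjoint ?_ (hint R hR S hS)
    rw [hdim R hR, hdim S hS, hV, two_mul]
  · simpa only [exists_mem_image, Subspace.dualAnnihilator_le_dualAnnihilator_iff] using hHY
  · obtain ⟨P, rfl⟩ : ∃ P : Submodule F V, P.dualAnnihilator = K :=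
      ⟨_, Subspace.dualCoannihilator_dualAnnihilator_eq⟩
    simp only [card_filter_image_dualAnnihilator, Subspace.dualAnnihilator_le_dualAnnihilator_iff]
    refine hmax P ?_
    have := Subspace.finrank_add_finrank_dualAnnihilator_eq P
    omega

end Duality

theorem weak_hilton_milner_two_general {F V : Type*} [Field F] [AddCommGroup V] [Module F V]
    {k : ℕ} (hF : 4 ≤ Nat.card F) (hk : 3 ≤ k) (hV : finrank F V = 2 * k)
    (Y : Set (Submodule F V)) (hdim : ∀ R ∈ Y, finrank F R = k)
    (hint : ∀ R ∈ Y, ∀ S ∈ Y, R ⊓ S ≠ ⊥)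
    (hdict : ¬ ∃ P : Submodule F V, finrank F P = 1 ∧ ∀ R ∈ Y, P ≤ R)
    (hdual : ¬ ∃ H : Submodule F V, finrank F H = 2 * k - 1 ∧ ∀ R ∈ Y, R ≤ H) :
    (Nat.card Y : ℚ) <
      3 * gaussBinom (Nat.card F) k 1 * gaussBinom (Nat.card F) (2 * k - 2) (k - 2) := by
  classical
  have : Finite F := Nat.finite_of_card_ne_zero (by omega)
  have : FiniteDimensional F V := FiniteDimensional.of_finrank_pos (by omega)
  have : Finite V := Module.finite_of_finite F
  lift Y to Finset (Submodule F V) using Y.toFinite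
  push Not at hdict hdual
  simp only [mem_coe, ← disjoint_iff.not] at hdim hint hdict hdual
  rw [gaussBinom_one_right (by omega), mul_assoc, Nat.card_coe_set_eq, Set.ncard_coe_finset]
  have hhyperplanes : (subspacesBetween (⊥ : Submodule F V) ⊤ (2 * k - 1)).Nonempty := by
    have : Nontrivial V := nontrivial_of_finrank_pos (R := F) (by omega)
    obtain ⟨H, -, hH⟩ := exists_hyperplane_ge (T := (⊥ : Submodule F V)) (n := 2 * k - 1)
      (by omega) bot_ne_top
    exact ⟨H, mem_subspacesBetween.mpr ⟨bot_le, le_top, hH⟩⟩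
  obtain ⟨H, hH, hHmax⟩ := exists_max_image _ (fun H => #{S ∈ Y | S ≤ H}) hhyperplanes
  simp only [mem_subspacesBetween, bot_le, le_top, true_and] at hH hHmax
  by_cases hpoint : ∃ P : Submodule F V, finrank F P = 1 ∧ #{S ∈ Y | S ≤ H} ≤ #{S ∈ Y | P ≤ S}
  · obtain ⟨P, hP, hHP⟩ := hpoint
    exact card_lt_of_dominant_point hF hk hV hdim hint hP (hdict P hP)
      fun K hK => (hHmax K (by omega)).trans hHP
  · push Not at hpoint
    exact card_lt_of_dominant_hyperplane hF hk hV hdim hint (by omega) (hdual H hH)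
      fun P hP => (hpoint P hP).le

end WeakHiltonMilner

/-- Theorem 1.6 (weak Hilton–Milner): for `q ≥ 4` and `k ≥ 4`, every independent set `Y` of
the `q`-Kneser graph `qK_{2k:k}` (i.e. intersecting family of `k`-spaces of `F_q^{2k}`)
that is not contained in a dictator nor in the dual of a dictator satisfies
`|Y| < 3·[k choose 1]_q·[2k-2 choose k-2]_q`. -/
theorem weak_hilton_milner_two (q k : ℕ) (hq4 : 4 ≤ q) (hq : IsPrimePow q) (hk : 4 ≤ k)
    (F : Type) [Field F] [Fintype F] (hF : Fintype.card F = q)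
    (Y : Set (Submodule F (Fin (2 * k) → F)))
    (hdim : ∀ R ∈ Y, Module.finrank F R = k)
    (hint : ∀ R ∈ Y, ∀ S ∈ Y, R ⊓ S ≠ ⊥)
    (hdict : ¬ ∃ p : Submodule F (Fin (2 * k) → F), Module.finrank F p = 1 ∧ ∀ R ∈ Y, p ≤ R)
    (hdual : ¬ ∃ H : Submodule F (Fin (2 * k) → F),
      Module.finrank F H = 2 * k - 1 ∧ ∀ R ∈ Y, R ≤ H) :
    (Nat.card Y : ℚ) <
      3 * gaussBinom q k 1 * gaussBinom q (2 * k - 2) (k - 2) := by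
  subst hF
  rw [← Nat.card_eq_fintype_card] at hq4 ⊢
  exact weak_hilton_milner_two_general hq4 (by omega) (by simp) Y hdim hint hdict hdual
end
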